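/- arXiv:2402.13893 — 3 statements merged into one kernel-verified Lean document; each statement's English description precedes it below -/
import Mathlib

section
/- Let n ≥ 2 and 1 ≤ j ≤ n−1, and let μ(n,j) ∈ ℝ^n be the vector whose first j coordinates equal 1 − j/n and whose remaining n−j coordinates equal −j/n (the j-th fundamental weight of SU(n)). Then the minimal integer r ≥ 1 such that C_r(O_{μ(n,j)}) is a convex set equals n + 1 − min(j, n−j). -/
/-- The `r`-th partial convex hull of a set `X`: the union of the convex hulls of all
`r`-tuples of points of `X`. -/
def partialConvexHull {E : Type*} [AddCommGroup E] [Module ℝ E]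
    (r : ℕ) (X : Set E) : Set E :=
  {y | ∃ f : Fin r → E, (∀ i, f i ∈ X) ∧ y ∈ convexHull ℝ (Set.range f)}

/-- The coadjoint orbit `O_λ` of `SU(n)`: the set of `n × n` complex Hermitian matrices
of trace zero whose eigenvalues, listed with multiplicity, are the entries of `lam`. -/
def coadjointOrbit {n : ℕ} (lam : Fin n → ℝ) : Set (Matrix (Fin n) (Fin n) ℂ) :=
  {A | A.trace = 0 ∧ ∃ hA : A.IsHermitian, ∃ σ : Equiv.Perm (Fin n),
      ∀ i, hA.eigenvalues (σ i) = lam i}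

namespace FW
open Matrix
open scoped ComplexOrder

abbrev Mat (n : ℕ) := Matrix (Fin n) (Fin n) ℂ

/-- rank `j` orthogonal projections -/
def IsPr (n j : ℕ) (P : Mat n) : Prop := P.IsHermitian ∧ P * P = P ∧ P.trace = (j : ℂ)

/-- convex combinations of `r` projections of rank `j` -/
def CC (n j r : ℕ) (A : Mat n) : Prop :=
  ∃ (t : Fin r → ℝ) (P : Fin r → Mat n), (∀ i, 0 ≤ t i) ∧ ∑ i, t i = 1 ∧
    (∀ i, IsPr n j (P i)) ∧ A = ∑ i, t i • P i

def KK (n j : ℕ) (A : Mat n) : Prop :=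
  A.PosSemidef ∧ (1 - A).PosSemidef ∧ A.trace = (j : ℂ)

def dg {n : ℕ} (a : Fin n → ℝ) : Mat n := diagonal (fun i => (a i : ℂ))

lemma dg_psd {n : ℕ} {a : Fin n → ℝ} : (dg a).PosSemidef ↔ ∀ i, 0 ≤ a i := by
  unfold dg
  rw [posSemidef_diagonal_iff]
  simp

lemma one_sub_dg {n : ℕ} (a : Fin n → ℝ) : 1 - dg a = dg (fun i => 1 - a i) := by
  unfold dg
  rw [← diagonal_one, diagonal_sub]
  simp

lemma trace_dg {n : ℕ} (a : Fin n → ℝ) : (dg a).trace = ((∑ i, a i : ℝ) : ℂ) := by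
  unfold dg
  simp [trace_diagonal]

lemma IsPr.conj {n j : ℕ} {P U : Mat n} (h : IsPr n j P) (hU : Uᴴ * U = 1) :
    IsPr n j (U * P * Uᴴ) := by
  obtain ⟨h1, h2, h3⟩ := h
  refine ⟨?_, ?_, ?_⟩
  · exact isHermitian_mul_mul_conjTranspose U h1
  · calc U * P * Uᴴ * (U * P * Uᴴ) = U * P * (Uᴴ * U) * P * Uᴴ := by simp only [Matrix.mul_assoc]
      _ = U * (P * P) * Uᴴ := by rw [hU]; simp only [Matrix.mul_assoc, Matrix.one_mul]
      _ = _ := by rw [h2]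
  · rw [trace_mul_comm, ← Matrix.mul_assoc, hU, Matrix.one_mul, h3]

lemma CC.conj {n j r : ℕ} {A U : Mat n} (h : CC n j r A) (hU : Uᴴ * U = 1) :
    CC n j r (U * A * Uᴴ) := by
  obtain ⟨t, P, h1, h2, h3, rfl⟩ := h
  refine ⟨t, fun i => U * P i * Uᴴ, h1, h2, fun i => (h3 i).conj hU, ?_⟩
  rw [Matrix.mul_sum, Matrix.sum_mul]
  simp

lemma IsPr.compl {n j : ℕ} {P : Mat n} (h : IsPr n j P) (hj : j ≤ n) : IsPr n (n - j) (1 - P) := by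
  obtain ⟨h1, h2, h3⟩ := h
  refine ⟨isHermitian_one.sub h1, ?_, ?_⟩
  · rw [Matrix.mul_sub, Matrix.sub_mul, Matrix.sub_mul, h2]; simp
  · rw [trace_sub, h3]; simp [Nat.cast_sub hj]

lemma CC.compl {n j r : ℕ} {A : Mat n} (h : CC n j r A) (hj : j ≤ n) :
    CC n (n - j) r (1 - A) := by
  obtain ⟨t, P, h1, h2, h3, rfl⟩ := h
  refine ⟨t, fun i => 1 - P i, h1, h2, fun i => (h3 i).compl hj, ?_⟩
  simp only [smul_sub, Finset.sum_sub_distrib, ← Finset.sum_smul, h2, one_smul]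

lemma KK.compl {n j : ℕ} {A : Mat n} (h : KK n j A) (hj : j ≤ n) : KK n (n - j) (1 - A) := by
  obtain ⟨h1, h2, h3⟩ := h
  refine ⟨h2, by simpa using h1, ?_⟩
  rw [trace_sub, h3]; simp [Nat.cast_sub hj]

lemma CC.succ {n j r : ℕ} {P B : Mat n} {t : ℝ} (ht0 : 0 ≤ t) (ht1 : t ≤ 1)
    (hP : IsPr n j P) (hB : CC n j r B) : CC n j (r + 1) (t • P + (1 - t) • B) := by
  obtain ⟨s, Q, h1, h2, h3, rfl⟩ := hB
  refine ⟨Fin.cons t (fun i => (1 - t) * s i), Fin.cons P Q, ?_, ?_, ?_, ?_⟩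
  · intro i
    refine Fin.cases ?_ (fun i => ?_) i
    · simpa using ht0
    · simpa using mul_nonneg (by linarith) (h1 i)
  · rw [Fin.sum_univ_succ]; simp [← Finset.mul_sum, h2]
  · intro i
    refine Fin.cases ?_ (fun i => ?_) i
    · simpa using hP
    · simpa using h3 i
  · rw [Fin.sum_univ_succ]; simp [Finset.smul_sum, smul_smul]

lemma CC.mono_succ {n j r : ℕ} {A : Mat n} (h : CC n j r A) : CC n j (r + 1) A := by
  have h' := h
  obtain ⟨s, Q, h1, h2, h3, rfl⟩ := h'
  rcases r with _ | r
  · simp at h2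
  · have := CC.succ (t := 0) le_rfl zero_le_one (h3 0) h
    simpa using this

lemma CC.mono {n j r r' : ℕ} {A : Mat n} (h : CC n j r A) (hr : r ≤ r') : CC n j r' A := by
  induction r', hr using Nat.le_induction with
  | base => exact h
  | succ k _ ih => exact ih.mono_succ

lemma exists_diag {n j : ℕ} {A : Mat n} (h : KK n j A) :
    ∃ (U : Mat n) (a : Fin n → ℝ), Uᴴ * U = 1 ∧ U * Uᴴ = 1 ∧ A = U * dg a * Uᴴ ∧
      (∀ i, 0 ≤ a i) ∧ (∀ i, a i ≤ 1) ∧ ∑ i, a i = j := by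
  obtain ⟨h1, h2, h3⟩ := h
  have hA := h1.isHermitian
  have hU1 : ((hA.eigenvectorUnitary : Mat n))ᴴ * (hA.eigenvectorUnitary : Mat n) = 1 :=
    (Unitary.mem_iff.1 hA.eigenvectorUnitary.2).1
  have hU2 : (hA.eigenvectorUnitary : Mat n) * ((hA.eigenvectorUnitary : Mat n))ᴴ = 1 :=
    (Unitary.mem_iff.1 hA.eigenvectorUnitary.2).2
  have hs : A = (hA.eigenvectorUnitary : Mat n) * dg hA.eigenvalues *
      ((hA.eigenvectorUnitary : Mat n))ᴴ := by
    conv_lhs => rw [hA.spectral_theorem, Unitary.conjStarAlgAut_apply]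
    rfl
  generalize (hA.eigenvectorUnitary : Mat n) = U at *
  generalize hA.eigenvalues = a at *
  have hd : Uᴴ * A * U = dg a := by
    rw [hs]
    calc _ = (Uᴴ * U) * dg a * (Uᴴ * U) := by simp only [Matrix.mul_assoc]
      _ = _ := by rw [hU1]; simp
  refine ⟨U, a, hU1, hU2, hs, ?_, ?_, ?_⟩
  · have := h1.conjTranspose_mul_mul_same U
    rw [hd] at this
    exact dg_psd.1 this
  · have := h2.conjTranspose_mul_mul_same U
    rw [Matrix.mul_sub, Matrix.sub_mul, hd, Matrix.mul_one, hU1, one_sub_dg] at this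
    intro i
    linarith [dg_psd.1 this i]
  · have : A.trace = (dg a).trace := by
      rw [hs, trace_mul_comm, ← Matrix.mul_assoc, hU1, Matrix.one_mul]
    rw [h3, trace_dg] at this
    exact_mod_cast this.symm

lemma det_conj {n : ℕ} {U M : Mat n} (hU : Uᴴ * U = 1) : (U * M * Uᴴ).det = M.det := by
  rw [det_mul_comm, ← Matrix.mul_assoc, hU, Matrix.one_mul]

lemma exists_zero_of_det {n : ℕ} {a : Fin n → ℝ} (h : (dg a).det = 0) : ∃ i, a i = 0 := by
  unfold dg at h
  rw [det_diagonal, Finset.prod_eq_zero_iff] at h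
  obtain ⟨i, _, hi⟩ := h
  exact ⟨i, by exact_mod_cast hi⟩

/-- extension by a block -/
lemma ext_IsPr {n j : ℕ} (e : Fin (n + 1) ≃ Fin n ⊕ Unit) {P : Mat n} (h : IsPr n j P)
    (c : ℕ) (hc : c = 0 ∨ c = 1) :
    IsPr (n + 1) (j + c) ((fromBlocks P 0 0 (diagonal fun _ => (c : ℂ))).submatrix e e) := by
  obtain ⟨h1, h2, h3⟩ := h
  refine ⟨?_, ?_, ?_⟩
  · apply IsHermitian.submatrix
    apply IsHermitian.fromBlocks h1 (by simp)
    rw [IsHermitian, diagonal_conjTranspose]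
    congr 1; ext; simp
  · rw [submatrix_mul_equiv, fromBlocks_multiply, h2]
    rcases hc with rfl | rfl <;> simp
  · rw [Matrix.trace, ]
    simp only [diag_apply, submatrix_apply]
    rw [e.sum_comp (fun x => fromBlocks P 0 0 (diagonal fun _ => (c : ℂ)) x x)]
    rw [Fintype.sum_sum_type]
    simp only [fromBlocks_apply₁₁, fromBlocks_apply₂₂]
    rw [Matrix.trace] at h3
    simp only [diag_apply] at h3
    rw [h3]; simp

lemma ext_CC {n j r : ℕ} (a : Fin (n + 1) → ℝ) (i : Fin (n + 1)) (c : ℕ) (hc : c = 0 ∨ c = 1)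
    (hi : a i = c) (h : CC n j r (dg (fun k => a (i.succAbove k)))) :
    CC (n + 1) (j + c) r (dg a) := by
  obtain ⟨t, P, h1, h2, h3, h4⟩ := h
  let e : Fin (n + 1) ≃ Fin n ⊕ Unit := (finSuccEquiv' i).trans (Equiv.optionEquivSumPUnit _)
  refine ⟨t, fun k => (fromBlocks (P k) 0 0 (diagonal fun _ => (c : ℂ))).submatrix e e, h1, h2,
    fun k => ext_IsPr e (h3 k) c hc, ?_⟩
  have key : dg a = (fromBlocks (∑ k, t k • P k) 0 0 (diagonal fun _ => (c : ℂ))).submatrix e e := by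
    rw [← h4]
    ext x y
    refine Fin.succAboveCases i ?_ (fun x => ?_) x <;> refine Fin.succAboveCases i ?_ (fun y => ?_) y
    · simp [dg, e, hi]
    · simp [dg, e]
    · simp [dg, e]
    · simp [dg, e, diagonal_apply]
  rw [key]
  ext x y
  simp only [submatrix_apply, Matrix.sum_apply, Matrix.smul_apply]
  rcases e x with x | x <;> rcases e y with y | y
  · simp [Matrix.sum_apply]
  · simp
  · simp
  · have : (∑ k, (t k : ℂ)) = 1 := by exact_mod_cast h2
    simp [← Finset.sum_mul, this]

end FW

namespace FW
open Matrix
open scoped ComplexOrder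

lemma mk_step {n j : ℕ} {A P : Mat n} {t : ℝ} (ht1 : t < 1) (hP : IsPr n j P)
    (hA : A.trace = j) (h0 : (A - t • P).PosSemidef)
    (h1 : (((1 - t : ℝ) : ℂ) • (1 : Mat n) - (A - t • P)).PosSemidef) :
    ∃ B : Mat n, KK n j B ∧ A = t • P + (1 - t) • B ∧
      ((∃ v, v ≠ 0 ∧ (A - t • P) *ᵥ v = 0) → B.det = 0) ∧
      ((∃ v, v ≠ 0 ∧ (A - t • P) *ᵥ v = ((1 - t : ℝ) : ℂ) • v) → (1 - B).det = 0) := by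
  have hs : (0 : ℝ) < 1 - t := by linarith
  have hs' : ((1 - t : ℝ) : ℂ) ≠ 0 := by exact_mod_cast hs.ne'
  have hpos : (0 : ℂ) ≤ (((1 - t)⁻¹ : ℝ) : ℂ) := by exact_mod_cast (inv_pos.2 hs).le
  have hinv : (((1 - t)⁻¹ : ℝ) : ℂ) * ((1 - t : ℝ) : ℂ) = 1 := by
    rw [← Complex.ofReal_mul, inv_mul_cancel₀ hs.ne']; simp
  have e1 : 1 - (((1 - t)⁻¹ : ℝ) : ℂ) • (A - t • P) =
      (((1 - t)⁻¹ : ℝ) : ℂ) • (((1 - t : ℝ) : ℂ) • (1 : Mat n) - (A - t • P)) := by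
    rw [smul_sub (((1 - t)⁻¹ : ℝ) : ℂ) (((1 - t : ℝ) : ℂ) • (1 : Mat n)), smul_smul, hinv, one_smul]
  refine ⟨(((1 - t)⁻¹ : ℝ) : ℂ) • (A - t • P), ⟨h0.smul hpos, ?_, ?_⟩, ?_, ?_, ?_⟩
  · rw [e1]; exact h1.smul hpos
  · have : (t • P).trace = t * j := by
      rw [trace_smul, hP.2.2]; simp
    rw [trace_smul, trace_sub, this, hA, smul_eq_mul]
    have : (j : ℂ) - t * j = ((1 - t : ℝ) : ℂ) * j := by push_cast; ring
    rw [this, ← mul_assoc, hinv, one_mul]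
  · have : (1 - t) • (((1 - t)⁻¹ : ℝ) : ℂ) • (A - t • P) = A - t • P := by
      ext x y
      simp only [Matrix.smul_apply, Complex.real_smul, smul_eq_mul]
      rw [← mul_assoc, mul_comm (((1 - t : ℝ)) : ℂ), hinv, one_mul]
    rw [this]; abel
  · rintro ⟨v, hv, h⟩
    apply Matrix.exists_mulVec_eq_zero_iff.1
    exact ⟨v, hv, by rw [smul_mulVec, h, smul_zero]⟩
  · rintro ⟨v, hv, h⟩
    apply Matrix.exists_mulVec_eq_zero_iff.1
    refine ⟨v, hv, ?_⟩
    rw [sub_mulVec, one_mulVec, smul_mulVec, h, smul_smul, hinv, one_smul, sub_self]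

def ind {n : ℕ} (S : Finset (Fin n)) : Fin n → ℝ := fun i => if i ∈ S then 1 else 0

lemma dg_ind_mul {n : ℕ} (S : Finset (Fin n)) : dg (ind S) * dg (ind S) = dg (ind S) := by
  unfold dg ind
  rw [diagonal_mul_diagonal]
  congr 1; ext i; split_ifs <;> simp

lemma isPr_ind {n : ℕ} (S : Finset (Fin n)) : IsPr n S.card (dg (ind S)) := by
  refine ⟨?_, dg_ind_mul S, ?_⟩
  · have : (dg (ind S)).PosSemidef := dg_psd.2 (fun i => by unfold ind; split_ifs <;> simp)
    exact this.isHermitian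
  · rw [trace_dg]; simp [ind]

lemma dg_mulVec_single {n : ℕ} (d : Fin n → ℝ) (i : Fin n) :
    dg d *ᵥ (Pi.single i 1) = (d i : ℂ) • (Pi.single i 1 : Fin n → ℂ) := by
  unfold dg
  ext x
  rw [mulVec_diagonal]
  by_cases h : x = i
  · subst h; simp
  · simp [h]

lemma step_diag {n : ℕ} {a : Fin n → ℝ} {t : ℝ} (ht1 : t < 1) (S : Finset (Fin n))
    (hsum : ∑ i, a i = S.card) (h0 : ∀ i, 0 ≤ a i) (h1 : ∀ i, a i ≤ 1)
    (hS : ∀ i ∈ S, t ≤ a i) (hS' : ∀ i ∉ S, a i ≤ 1 - t) :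
    ∃ B : Mat n, KK n S.card B ∧ dg a = t • dg (ind S) + (1 - t) • B ∧
      ((∃ i ∈ S, a i = t) → B.det = 0) ∧ ((∃ i ∉ S, a i = 1 - t) → (1 - B).det = 0) := by
  have e0 : dg a - t • dg (ind S) = dg (fun i => a i - t * ind S i) := by
    ext x y
    simp [dg, diagonal_apply]; split_ifs <;> simp
  have e1 : ((1 - t : ℝ) : ℂ) • (1 : Mat n) - (dg a - t • dg (ind S)) =
      dg (fun i => 1 - t - (a i - t * ind S i)) := by
    rw [e0]
    ext x y
    simp [dg, diagonal_apply, Matrix.one_apply]; split_ifs <;> simp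
  obtain ⟨B, hB, hB1, hB2, hB3⟩ := mk_step (A := dg a) ht1 (isPr_ind S)
    (by rw [trace_dg, hsum]; simp)
    (by
      rw [e0]; refine dg_psd.2 fun i => ?_
      unfold ind; split_ifs with h
      · linarith [hS i h]
      · linarith [h0 i])
    (by
      rw [e1]; refine dg_psd.2 fun i => ?_
      unfold ind; split_ifs with h
      · linarith [h1 i]
      · linarith [hS' i h])
  refine ⟨B, hB, hB1, ?_, ?_⟩
  · rintro ⟨i, hi, h⟩
    refine hB2 ⟨Pi.single i 1, by simp, ?_⟩
    rw [e0, dg_mulVec_single]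
    simp [ind, hi, h]
  · rintro ⟨i, hi, h⟩
    refine hB3 ⟨Pi.single i 1, by simp, ?_⟩
    rw [e0, dg_mulVec_single]
    simp [ind, hi, h]

/-- rank one real matrix -/
def rk {n : ℕ} (z : Fin n → ℝ) : Mat n := Matrix.of fun x y => ((z x * z y : ℝ) : ℂ)

lemma rk_psd {n : ℕ} (z : Fin n → ℝ) : (rk z).PosSemidef := by
  have : rk z = vecMulVec (fun i => (z i : ℂ)) (star fun i => (z i : ℂ)) := by
    ext x y; simp [rk, vecMulVec_apply]
  rw [this]; exact posSemidef_vecMulVec_self_star _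

lemma rk_mul {n : ℕ} (z : Fin n → ℝ) : rk z * rk z = ((∑ i, z i * z i : ℝ) : ℂ) • rk z := by
  ext x y
  simp only [rk, Matrix.mul_apply, of_apply, Matrix.smul_apply, smul_eq_mul]
  rw [Complex.ofReal_sum, Finset.sum_mul]
  refine Finset.sum_congr rfl fun i _ => ?_
  push_cast; ring

lemma rk_trace {n : ℕ} (z : Fin n → ℝ) : (rk z).trace = ((∑ i, z i * z i : ℝ) : ℂ) := by
  simp [rk, Matrix.trace]

def two {n : ℕ} (k l : Fin n) (x y : ℝ) : Fin n → ℝ :=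
  fun i => if i = k then x else if i = l then y else 0

lemma two_sum {n : ℕ} {k l : Fin n} (hkl : k ≠ l) (x y : ℝ) (f : Fin n → ℝ) :
    ∑ i, f i * two k l x y i = f k * x + f l * y := by
  have : ∀ i, f i * two k l x y i = (if i = k then f k * x else 0) + (if i = l then f l * y else 0) := by
    intro i
    unfold two
    by_cases h : i = k
    · subst h; simp [hkl]
    · by_cases h' : i = l
      · subst h'; simp [h]
      · simp [h, h']
  simp only [this, Finset.sum_add_distrib]
  simp

lemma two_k {n : ℕ} (k l : Fin n) (x y : ℝ) : two k l x y k = x := by simp [two]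
lemma two_l {n : ℕ} {k l : Fin n} (hkl : k ≠ l) (x y : ℝ) : two k l x y l = y := by
  simp [two, hkl.symm]
lemma two_o {n : ℕ} {k l i : Fin n} (h : i ≠ k) (h' : i ≠ l) (x y : ℝ) : two k l x y i = 0 := by
  simp [two, h, h']

lemma step_rot {n : ℕ} {a : Fin n → ℝ} {t : ℝ} (ht1 : t < 1) (R : Finset (Fin n))
    (k l i1 : Fin n) (hkl : k ≠ l) (hk : k ∉ R) (hl : l ∉ R) (hi : i1 ∉ R) (hik : i1 ≠ k)
    (hil : i1 ≠ l)
    (hsum : ∑ i, a i = (R.card + 1 : ℕ)) (h0 : ∀ i, 0 ≤ a i) (hq : 0 < a l) (hlt : a l < t)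
    (htk : t ≤ a k) (hR : ∀ i ∈ R, t ≤ a i) (hM : ∀ i, a i ≤ 1 - t) (hi1 : a i1 = 1 - t) :
    ∃ P B : Mat n, IsPr n (R.card + 1) P ∧ KK n (R.card + 1) B ∧ dg a = t • P + (1 - t) • B ∧
      B.det = 0 ∧ (1 - B).det = 0 := by
  obtain ⟨α, hα⟩ : ∃ α : ℝ, α * α = a k := ⟨√(a k), Real.mul_self_sqrt (h0 k)⟩
  obtain ⟨β, hβ⟩ : ∃ β : ℝ, β * β = a l := ⟨√(a l), Real.mul_self_sqrt (h0 l)⟩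
  obtain ⟨γ, hγ⟩ : ∃ γ : ℝ, γ * γ = t - a l := ⟨√(t - a l), Real.mul_self_sqrt (by linarith)⟩
  obtain ⟨δ, hδ⟩ : ∃ δ : ℝ, δ * δ = a k - t := ⟨√(a k - t), Real.mul_self_sqrt (by linarith)⟩
  have ht0 : 0 < t := by linarith
  have hpq : 0 < a k - a l := by linarith
  obtain ⟨z, hz⟩ : ∃ z, z = two k l (α * γ) (β * δ) := ⟨_, rfl⟩
  obtain ⟨w, hw⟩ : ∃ w, w = two k l (α * δ) (-(β * γ)) := ⟨_, rfl⟩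
  obtain ⟨c, hc⟩ : ∃ c : ℝ, c = (a k - a l)⁻¹ := ⟨_, rfl⟩
  have hc0 : 0 < c := by rw [hc]; exact inv_pos.2 hpq
  have hc1 : c * (a k - a l) = 1 := by rw [hc]; exact inv_mul_cancel₀ hpq.ne'
  have hzk : z k = α * γ := by rw [hz, two_k]
  have hzl : z l = β * δ := by rw [hz, two_l hkl]
  have hwk : w k = α * δ := by rw [hw, two_k]
  have hwl : w l = -(β * γ) := by rw [hw, two_l hkl]
  have hzo : ∀ i, i ≠ k → i ≠ l → z i = 0 := fun i h h' => by rw [hz, two_o h h']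
  have hwo : ∀ i, i ≠ k → i ≠ l → w i = 0 := fun i h h' => by rw [hw, two_o h h']
  have hzz : ∑ i, z i * z i = t * (a k - a l) := by
    have := two_sum hkl (α * γ) (β * δ) z
    rw [← hz] at this
    rw [this, hzk, hzl]
    linear_combination (γ * γ) * hα + a k * hγ + (δ * δ) * hβ + a l * hδ
  have hzR : ∀ i ∈ R, z i = 0 := fun i h =>
    hzo i (fun h' => hk (h' ▸ h)) (fun h' => hl (h' ▸ h))
  have hct : (((c / t : ℝ)) : ℂ) * ((∑ i, z i * z i : ℝ) : ℂ) = 1 := by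
    rw [← Complex.ofReal_mul, hzz]
    have : c / t * (t * (a k - a l)) = 1 := by
      field_simp; linarith
    rw [this]; simp
  have m1 : dg (ind R) * rk z = 0 := by
    ext x y
    simp only [dg, rk, diagonal_mul, of_apply, Matrix.zero_apply, ind]
    split_ifs with h
    · simp [hzR x h]
    · simp
  have m2 : rk z * dg (ind R) = 0 := by
    ext x y
    simp only [dg, rk, mul_diagonal, of_apply, Matrix.zero_apply, ind]
    split_ifs with h
    · simp [hzR y h]
    · simp
  have hP : IsPr n (R.card + 1) (dg (ind R) + ((c / t : ℝ) : ℂ) • rk z) := by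
    refine ⟨?_, ?_, ?_⟩
    · refine (isPr_ind R).1.add ((rk_psd z).smul ?_).1
      exact_mod_cast (div_pos hc0 ht0).le
    · rw [Matrix.mul_add, Matrix.add_mul, Matrix.add_mul, dg_ind_mul, Matrix.smul_mul,
        Matrix.mul_smul, m2, m1, Matrix.smul_mul, Matrix.mul_smul, rk_mul, smul_smul, smul_smul,
        mul_assoc, hct]
      simp
    · rw [trace_add, (isPr_ind R).2.2, trace_smul, rk_trace, smul_eq_mul, hct]; simp
  have eP : t • (dg (ind R) + ((c / t : ℝ) : ℂ) • rk z) =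
      dg (fun i => t * ind R i) + (c : ℂ) • rk z := by
    have : t * (c / t) = c := by field_simp
    rw [smul_add]
    congr 1
    · ext x y
      simp [dg, diagonal_apply]
    · conv_rhs => rw [← this]
      ext x y
      simp only [Matrix.smul_apply, Complex.real_smul, smul_eq_mul]
      push_cast; ring
  let d : Fin n → ℝ := fun i => if i = k ∨ i = l then 0 else a i - t * ind R i
  have e0 : dg a - t • (dg (ind R) + ((c / t : ℝ) : ℂ) • rk z) = dg d + (c : ℂ) • rk w := by
    rw [eP]
    ext x y
    have hkR : ind R k = 0 := by simp [ind, hk]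
    have hlR : ind R l = 0 := by simp [ind, hl]
    have i1 : a k = c * (z k * z k) + c * (w k * w k) := by
      rw [hzk, hwk]
      linear_combination (-a k) * hc1 - (c * (γ * γ + δ * δ)) * hα - c * a k * (hγ + hδ)
    have i2 : a l = c * (z l * z l) + c * (w l * w l) := by
      rw [hzl, hwl]
      linear_combination (-a l) * hc1 - (c * (γ * γ + δ * δ)) * hβ - c * a l * (hγ + hδ)
    have i3 : z k * z l + w k * w l = 0 := by rw [hzk, hzl, hwk, hwl]; ring
    have key : (if x = y then a x - t * ind R x else 0) - c * (z x * z y) =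
        (if x = y then d x else 0) + c * (w x * w y) := by
      by_cases hxk : x = k
      · subst hxk
        by_cases hyk : y = x
        · subst hyk; simp [d, hkR]; linarith
        · by_cases hyl : y = l
          · subst hyl; simp [hkl]; linear_combination (-c) * i3
          · simp [Ne.symm hyk, hzo y hyk hyl, hwo y hyk hyl]
      · by_cases hxl : x = l
        · subst hxl
          by_cases hyk : y = k
          · subst hyk; simp [hkl.symm]; linear_combination (-c) * i3
          · by_cases hyl : y = x
            · subst hyl; simp [d, hlR]; linarith
            · simp [Ne.symm hyl, hzo y hyk hyl, hwo y hyk hyl]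
        · simp [hzo x hxk hxl, hwo x hxk hxl, d, hxk, hxl]
    have key' := congrArg (fun r : ℝ => (r : ℂ)) key
    simp only [dg, rk, Matrix.sub_apply, Matrix.add_apply, Matrix.smul_apply, diagonal_apply,
      of_apply, smul_eq_mul]
    by_cases hxy : x = y
    · simp only [hxy, if_true] at key' ⊢
      push_cast at key' ⊢
      linear_combination key'
    · simp only [hxy, if_false] at key' ⊢
      push_cast at key' ⊢
      linear_combination key'
  have e1 : ((1 - t : ℝ) : ℂ) • (1 : Mat n) -
      (dg a - t • (dg (ind R) + ((c / t : ℝ) : ℂ) • rk z)) =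
      dg (fun i => 1 - t - (a i - t * ind R i)) + (c : ℂ) • rk z := by
    rw [eP]
    ext x y
    simp only [dg, Matrix.sub_apply, Matrix.add_apply, Matrix.smul_apply, diagonal_apply,
      Matrix.one_apply, smul_eq_mul]
    split_ifs <;> push_cast <;> ring
  have hcC : (0 : ℂ) ≤ (c : ℂ) := by exact_mod_cast hc0.le
  obtain ⟨B, hB, hB1, hB2, hB3⟩ := mk_step (A := dg a) ht1 hP
    (by rw [trace_dg, hsum]; simp)
    (by
      rw [e0]; refine (dg_psd.2 fun i => ?_).add ((rk_psd w).smul hcC)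
      simp only [d, ind]; split_ifs with h h'
      · exact le_rfl
      · linarith [hR i h']
      · linarith [h0 i])
    (by
      rw [e1]; refine (dg_psd.2 fun i => ?_).add ((rk_psd z).smul hcC)
      unfold ind; split_ifs with h
      · linarith [hM i]
      · linarith [hM i])
  refine ⟨_, B, hP, hB, hB1, hB2 ?_, hB3 ?_⟩
  · refine ⟨fun i => (two k l (β * γ) (α * δ) i : ℂ), ?_, ?_⟩
    · intro h
      have h := congrFun h k
      simp only [two_k, Pi.zero_apply] at h
      have h : β * γ = 0 := by exact_mod_cast h
      rcases mul_eq_zero.1 h with h | h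
      · rw [h] at hβ; linarith
      · rw [h] at hγ; linarith
    · rw [e0, add_mulVec, smul_mulVec]
      have a1 : dg d *ᵥ (fun i => (two k l (β * γ) (α * δ) i : ℂ)) = 0 := by
        ext x
        simp only [dg, mulVec_diagonal, Pi.zero_apply]
        by_cases h : x = k ∨ x = l
        · simp [d, h]
        · push Not at h
          simp [two_o h.1 h.2]
      have a2 : rk w *ᵥ (fun i => (two k l (β * γ) (α * δ) i : ℂ)) = 0 := by
        ext x
        simp only [rk, mulVec, dotProduct, of_apply, Pi.zero_apply]
        have := two_sum hkl (β * γ) (α * δ) (fun i => w x * w i)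
        rw [hwk, hwl] at this
        have h2 : w x * (α * δ) * (β * γ) + w x * -(β * γ) * (α * δ) = 0 := by ring
        rw [h2] at this
        exact_mod_cast this
      rw [a1, a2]; simp
  · refine ⟨Pi.single i1 1, by simp, ?_⟩
    rw [e0, add_mulVec, smul_mulVec, dg_mulVec_single]
    have : rk w *ᵥ (Pi.single i1 1) = 0 := by
      ext x
      simp [rk, hwo i1 hik hil]
    rw [this]
    simp [d, hik, hil, ind, hi, hi1]

end FW

namespace FW
open Matrix
open scoped ComplexOrder

lemma count_bound {n j : ℕ} {a : Fin n → ℝ} {m : ℝ} (hj : 1 ≤ j) (hjn : 2 * j ≤ n)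
    (hsum : ∑ i, a i = j) (hm0 : 0 ≤ m) (hm : ∀ i, m ≤ a i) :
    m ≤ 1 / 2 ∧ (Finset.univ.filter fun i => 1 - m < a i).card < j := by
  have hjn' : (2 : ℝ) * j ≤ n := by exact_mod_cast hjn
  have hj' : (1 : ℝ) ≤ j := by exact_mod_cast hj
  have hmn : (n : ℝ) * m ≤ j := by
    rw [← hsum]
    calc (n : ℝ) * m = ∑ _i : Fin n, m := by simp
      _ ≤ _ := Finset.sum_le_sum fun i _ => hm i
  have hm2 : m ≤ 1 / 2 := by
    by_contra h
    push Not at h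
    nlinarith
  refine ⟨hm2, ?_⟩
  by_contra hcon
  push Not at hcon
  set H := Finset.univ.filter fun i => 1 - m < a i with hH
  have hcon' : (j : ℝ) ≤ H.card := by exact_mod_cast hcon
  have hne : H.Nonempty := Finset.card_pos.1 (by omega)
  obtain ⟨i0, hi0⟩ := hne
  have hlt : ∑ i, (m + if i ∈ H then 1 - 2 * m else 0) < ∑ i, a i := by
    apply Finset.sum_lt_sum
    · intro i _
      split_ifs with h
      · have := (Finset.mem_filter.1 h).2; linarith
      · linarith [hm i]
    · refine ⟨i0, Finset.mem_univ _, ?_⟩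
      have := (Finset.mem_filter.1 hi0).2
      rw [if_pos hi0]; linarith
  rw [Finset.sum_add_distrib, hsum] at hlt
  simp at hlt
  nlinarith

lemma step1 {n j : ℕ} {a : Fin n → ℝ} (hj : 1 ≤ j) (hjn : 2 * j ≤ n)
    (hsum : ∑ i, a i = j) (h0 : ∀ i, 0 < a i) (h1 : ∀ i, a i < 1) :
    ∃ (t : ℝ) (P B : Mat n), 0 ≤ t ∧ t ≤ 1 ∧ IsPr n j P ∧ KK n j B ∧
      dg a = t • P + (1 - t) • B ∧ B.det = 0 := by
  have : Nonempty (Fin n) := ⟨⟨0, by omega⟩⟩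
  obtain ⟨i0, hi0⟩ := Finite.exists_min a
  obtain ⟨hm2, hc⟩ := count_bound hj hjn hsum (h0 i0).le hi0
  obtain ⟨S, hS1, -, hS2⟩ := Finset.exists_subsuperset_card_eq
    (s := insert i0 (Finset.univ.filter fun i => 1 - a i0 < a i)) (t := Finset.univ) (n := j)
    (Finset.subset_univ _) ((Finset.card_insert_le _ _).trans (by omega)) (by simp; omega)
  obtain ⟨B, hB1, hB2, hB3, -⟩ := step_diag (a := a) (t := a i0) (h1 i0) S (by rw [hS2, hsum])
    (fun i => (h0 i).le) (fun i => (h1 i).le) (fun i _ => hi0 i) (by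
      intro i hi
      by_contra hcon
      push Not at hcon
      exact hi (hS1 (Finset.mem_insert_of_mem (by simpa using hcon))))
  subst hS2
  exact ⟨a i0, _, B, (h0 i0).le, (h1 i0).le, isPr_ind S, hB1, hB2,
    hB3 ⟨i0, hS1 (Finset.mem_insert_self _ _), rfl⟩⟩

lemma step2_aux {n j : ℕ} {a : Fin n → ℝ} (hj : 1 ≤ j) (hjn : 2 * j = n)
    (hsum : ∑ i, a i = j) (h0 : ∀ i, 0 < a i) (h1 : ∀ i, a i < 1)
    (i0 i1 : Fin n) (hne : i0 ≠ i1) (hi0 : ∀ i, a i0 ≤ a i) (hi1 : ∀ i, a i ≤ a i1)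
    (hle : a i0 + a i1 ≤ 1) :
    ∃ (t : ℝ) (P B : Mat n), 0 ≤ t ∧ t ≤ 1 ∧ IsPr n j P ∧ KK n j B ∧
      dg a = t • P + (1 - t) • B ∧ B.det = 0 ∧ (1 - B).det = 0 := by
  have ht1 : 1 - a i1 < 1 := by linarith [h0 i1]
  rcases hle.eq_or_lt with heq | hlt
  · obtain ⟨S, hS1, hS3, hS2⟩ := Finset.exists_subsuperset_card_eq
      (s := {i0}) (t := Finset.univ.erase i1) (n := j)
      (by simpa using hne) (by simpa using hj) (by simp; omega)
    have hi1S : i1 ∉ S := fun h => by simpa using hS3 h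
    obtain ⟨B, hB1, hB2, hB3, hB4⟩ := step_diag (a := a) (t := 1 - a i1) ht1 S
      (by rw [hS2, hsum])
      (fun i => (h0 i).le) (fun i => (h1 i).le) (fun i _ => by linarith [hi0 i])
      (fun i _ => by linarith [hi1 i])
    subst hS2
    exact ⟨1 - a i1, _, B, by linarith [h1 i1], ht1.le, isPr_ind S, hB1, hB2,
      hB3 ⟨i0, hS1 (by simp), by linarith⟩, hB4 ⟨i1, hi1S, by ring⟩⟩
  · have hb := (count_bound (a := fun i => 1 - a i) (m := 1 - a i1) hj hjn.le
      (by
        rw [Finset.sum_sub_distrib, hsum]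
        simp
        rw [← hjn]; push_cast; ring)
      (by linarith [h1 i1]) (fun i => by linarith [hi1 i]))
    obtain ⟨hM, hc⟩ := hb
    set L := Finset.univ.filter fun i => 1 - (1 - a i1) < 1 - a i with hL
    have hLc : (Finset.univ \ L).card = n - L.card := by
      rw [Finset.card_sdiff_of_subset (Finset.subset_univ _)]; simp
    obtain ⟨S, hS1, hS2⟩ := Finset.exists_subset_card_eq (s := (Finset.univ \ L).erase i1) (n := j)
      (by
        have := Finset.pred_card_le_card_erase (s := Finset.univ \ L) (a := i1)
        omega)
    have hS : ∀ i ∈ S, 1 - a i1 ≤ a i := by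
      intro i hi
      have := hS1 hi
      simp [hL] at this
      linarith [this.2]
    have hi1S : i1 ∉ S := fun h => by simpa using hS1 h
    have hi0S : i0 ∉ S := fun h => by linarith [hS i0 h]
    obtain ⟨k, hk⟩ : S.Nonempty := Finset.card_pos.1 (by omega)
    have hcard : (S.erase k).card + 1 = j := by rw [Finset.card_erase_add_one hk, hS2]
    obtain ⟨P, B, hP, hB, h2, h3, h4⟩ := step_rot (a := a) (t := 1 - a i1) ht1 (S.erase k) k i0 i1
      (fun h => hi0S (h ▸ hk)) (by simp) (fun h => hi0S (Finset.mem_of_mem_erase h))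
      (fun h => hi1S (Finset.mem_of_mem_erase h)) (fun h => hi1S (h ▸ hk)) hne.symm
      (by rw [hcard, hsum]) (fun i => (h0 i).le) (h0 i0) (by linarith) (hS k hk)
      (fun i hi => hS i (Finset.mem_of_mem_erase hi)) (fun i => by linarith [hi1 i]) (by ring)
    rw [hcard] at hP hB
    exact ⟨1 - a i1, P, B, by linarith [h1 i1], ht1.le, hP, hB, h2, h3, h4⟩

lemma step2 {n j : ℕ} {a : Fin n → ℝ} (hj : 1 ≤ j) (hjn : 2 * j = n)
    (hsum : ∑ i, a i = j) (h0 : ∀ i, 0 < a i) (h1 : ∀ i, a i < 1) :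
    ∃ (t : ℝ) (P B : Mat n), 0 ≤ t ∧ t ≤ 1 ∧ IsPr n j P ∧ KK n j B ∧
      dg a = t • P + (1 - t) • B ∧ B.det = 0 ∧ (1 - B).det = 0 := by
  have : Nonempty (Fin n) := ⟨⟨0, by omega⟩⟩
  obtain ⟨i0, hi0⟩ := Finite.exists_min a
  obtain ⟨i1, hi1m, hi1'⟩ := Finset.exists_max_image (Finset.univ.erase i0) a
    (Finset.card_pos.1 (by simp; omega))
  have hne : i0 ≠ i1 := fun h => by simp [h] at hi1m
  have hi1 : ∀ i, a i ≤ a i1 := by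
    intro i
    by_cases h : i = i0
    · rw [h]; exact hi0 i1
    · exact hi1' i (by simp [h])
  rcases le_total (a i0 + a i1) 1 with h | h
  · exact step2_aux hj hjn hsum h0 h1 i0 i1 hne hi0 hi1 h
  · obtain ⟨t, P, B, ht0, ht1, hP, hB, h2, h3, h4⟩ := step2_aux (a := fun i => 1 - a i) hj hjn
      (by
        rw [Finset.sum_sub_distrib, hsum]
        simp
        rw [← hjn]; push_cast; ring)
      (fun i => by linarith [h1 i]) (fun i => by linarith [h0 i]) i1 i0 hne.symm
      (fun i => by linarith [hi1 i]) (fun i => by linarith [hi0 i]) (by linarith)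
    have hnj : n - j = j := by omega
    have hP' := hP.compl (by omega)
    have hB' := hB.compl (by omega)
    rw [hnj] at hP' hB'
    refine ⟨t, 1 - P, 1 - B, ht0, ht1, hP', hB', ?_, h4, by simpa using h3⟩
    rw [← one_sub_dg] at h2
    rw [← sub_sub_cancel 1 (dg a), h2, smul_sub, smul_sub, sub_smul (1 : ℝ) t (1 : Mat n), one_smul]
    abel

lemma KK_dg {n j : ℕ} {a : Fin n → ℝ} (h0 : ∀ i, 0 ≤ a i) (h1 : ∀ i, a i ≤ 1)
    (hsum : ∑ i, a i = j) : KK n j (dg a) := by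
  refine ⟨dg_psd.2 h0, ?_, ?_⟩
  · rw [one_sub_dg]; exact dg_psd.2 fun i => by linarith [h1 i]
  · rw [trace_dg, hsum]; simp

lemma KK.le {n j : ℕ} {A : Mat n} (h : KK n j A) : j ≤ n := by
  obtain ⟨U, a, -, -, -, h0, h1, hs⟩ := exists_diag h
  have : (j : ℝ) ≤ n := by
    rw [← hs]
    calc ∑ i, a i ≤ ∑ _i : Fin n, (1 : ℝ) := Finset.sum_le_sum fun i _ => h1 i
      _ = n := by simp
  exact_mod_cast this

def Good (n : ℕ) : Prop := ∀ j A, KK n j A → CC n j (max (n - j) j + 1) A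

lemma zero_case {m j r : ℕ} {a : Fin (m + 1) → ℝ} (i : Fin (m + 1)) (hi : a i = 0)
    (h : CC m j r (dg fun k => a (i.succAbove k))) : CC (m + 1) j r (dg a) :=
  ext_CC a i 0 (Or.inl rfl) (by simpa using hi) h

lemma sum_zero {m : ℕ} (a : Fin (m + 1) → ℝ) (i : Fin (m + 1)) :
    ∑ k, a (i.succAbove k) = ∑ k, a k - a i := by
  rw [Fin.sum_univ_succAbove a i]; ring

lemma one_case {m j : ℕ} (hG : Good m) {a : Fin (m + 1) → ℝ}
    (h0 : ∀ i, 0 ≤ a i) (h1 : ∀ i, a i ≤ 1) (hsum : ∑ i, a i = j)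
    (i : Fin (m + 1)) (hi : a i = 1) :
    1 ≤ j ∧ CC (m + 1) j (max (m + 1 - j) (j - 1) + 1) (dg a) := by
  have hs := sum_zero a i
  rw [hsum, hi] at hs
  have hj : 1 ≤ j := by
    have : 0 ≤ ∑ k, a (i.succAbove k) := Finset.sum_nonneg fun k _ => h0 _
    have : (1 : ℝ) ≤ j := by linarith
    exact_mod_cast this
  refine ⟨hj, ?_⟩
  obtain ⟨j', rfl⟩ : ∃ j', j = j' + 1 := ⟨j - 1, by omega⟩
  have := hG j' _ (KK_dg (fun k => h0 (i.succAbove k)) (fun k => h1 _)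
    (by rw [hs]; push_cast; ring))
  have := ext_CC a i 1 (Or.inr rfl) (by simpa using hi) this
  convert this using 2
  simp

lemma good_diag_half {n j : ℕ} (hG : ∀ m < n, Good m) {a : Fin n → ℝ}
    (h0 : ∀ i, 0 < a i) (h1 : ∀ i, a i < 1) (hsum : ∑ i, a i = j) (hj : 1 ≤ j) (hjn : 2 * j ≤ n) :
    CC n j (max (n - j) j + 1) (dg a) := by
  obtain ⟨m, rfl⟩ : ∃ m, n = m + 1 := ⟨n - 1, by omega⟩
  rcases hjn.eq_or_lt with heq | hlt
  · obtain ⟨t, P, B, ht0, ht1, hP, hB, h2, h3, h4⟩ := step2 hj heq hsum h0 h1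
    rw [h2]
    refine CC.succ ht0 ht1 hP ?_
    obtain ⟨U, b, hU1, hU2, rfl, hb0, hb1, hbs⟩ := exists_diag hB
    refine CC.conj ?_ hU1
    rw [det_conj hU1] at h3
    have h5 : 1 - U * dg b * Uᴴ = U * (1 - dg b) * Uᴴ := by
      rw [Matrix.mul_sub, Matrix.sub_mul, Matrix.mul_one, hU2]
    rw [h5, det_conj hU1, one_sub_dg] at h4
    obtain ⟨i, hi⟩ := exists_zero_of_det h3
    obtain ⟨k, hk⟩ := exists_zero_of_det h4
    have hk : b k = 1 := by linarith
    have hki : k ≠ i := fun h => by rw [h, hi] at hk; norm_num at hk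
    obtain ⟨k', rfl⟩ := Fin.exists_succAbove_eq hki
    apply zero_case i hi
    obtain ⟨m', rfl⟩ : ∃ m', m = m' + 1 := ⟨m - 1, by omega⟩
    have := (one_case (j := j) (hG m' (by omega)) (a := fun k => b (i.succAbove k))
      (fun k => hb0 _) (fun k => hb1 _) (by rw [sum_zero, hbs, hi]; ring) k' hk).2
    exact this.mono (by omega)
  · obtain ⟨t, P, B, ht0, ht1, hP, hB, h2, h3⟩ := step1 hj hjn hsum h0 h1
    rw [h2]
    refine CC.succ ht0 ht1 hP ?_
    obtain ⟨U, b, hU1, hU2, rfl, hb0, hb1, hbs⟩ := exists_diag hB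
    refine CC.conj ?_ hU1
    rw [det_conj hU1] at h3
    obtain ⟨i, hi⟩ := exists_zero_of_det h3
    apply zero_case i hi
    have := hG m (by omega) j _ (KK_dg (fun k => hb0 (i.succAbove k)) (fun k => hb1 _)
      (by rw [sum_zero, hbs, hi]; ring))
    exact this.mono (by omega)

theorem good (n : ℕ) : Good n := by
  induction n using Nat.strong_induction_on with
  | _ n hG =>
  intro j A hA
  have hjn := hA.le
  obtain ⟨U, a, hU1, hU2, rfl, h0, h1, hs⟩ := exists_diag hA
  refine CC.conj ?_ hU1
  rcases n with _ | m
  · have : j = 0 := by omega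
    subst this
    refine ⟨fun _ => 1, fun _ => 0, fun _ => zero_le_one, by simp, fun _ => ?_, ?_⟩
    · refine ⟨isHermitian_zero, by simp, by simp⟩
    · ext x; exact x.elim0
  by_cases hz : ∃ i, a i = 0
  · obtain ⟨i, hi⟩ := hz
    apply zero_case i hi
    have := hG m (by omega) j _ (KK_dg (fun k => h0 (i.succAbove k)) (fun k => h1 _)
      (by rw [sum_zero, hs, hi]; ring))
    exact this.mono (by omega)
  by_cases ho : ∃ i, a i = 1
  · obtain ⟨i, hi⟩ := ho
    exact (one_case (hG m (by omega)) h0 h1 hs i hi).2.mono (by omega)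
  push Not at hz ho
  have h0' : ∀ i, 0 < a i := fun i => lt_of_le_of_ne (h0 i) (hz i).symm
  have h1' : ∀ i, a i < 1 := fun i => lt_of_le_of_ne (h1 i) (ho i)
  have hj : 1 ≤ j := by
    have : 0 < ∑ i, a i := Finset.sum_pos (fun i _ => h0' i) ⟨0, Finset.mem_univ _⟩
    rw [hs] at this
    exact_mod_cast this
  have hs' : ∑ i, (1 - a i) = ((m + 1 - j : ℕ) : ℝ) := by
    rw [Finset.sum_sub_distrib, hs, Nat.cast_sub hjn]; simp
  have hj' : 1 ≤ m + 1 - j := by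
    have : 0 < ∑ i, (1 - a i) :=
      Finset.sum_pos (fun i _ => by linarith [h1' i]) ⟨0, Finset.mem_univ _⟩
    rw [hs'] at this
    exact_mod_cast this
  rcases le_total (2 * j) (m + 1) with h | h
  · exact good_diag_half hG h0' h1' hs hj h
  · have := good_diag_half hG (a := fun i => 1 - a i) (fun i => by linarith [h1' i])
      (fun i => by linarith [h0' i]) hs' hj' (by omega)
    rw [← one_sub_dg] at this
    have := this.compl (by omega)
    rw [sub_sub_cancel] at this
    have e : m + 1 - (m + 1 - j) = j := by omega
    rw [e, max_comm] at this
    exact this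

end FW

namespace FW
open Matrix
open scoped ComplexOrder

lemma IsPr.KK {n j : ℕ} {P : Mat n} (h : IsPr n j P) : KK n j P := by
  have key : ∀ Q : Mat n, Q.IsHermitian → Q * Q = Q → Q.PosSemidef := by
    intro Q h1 h2
    have := posSemidef_conjTranspose_mul_self Q
    rwa [h1.eq, h2] at this
  refine ⟨key P h.1 h.2.1, key _ (isHermitian_one.sub h.1) ?_, h.2.2⟩
  rw [Matrix.mul_sub, Matrix.sub_mul, Matrix.sub_mul, h.2.1]; simp

lemma KK_convex {n j : ℕ} : Convex ℝ {A : Mat n | KK n j A} := by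
  rintro A ⟨a1, a2, a3⟩ B ⟨b1, b2, b3⟩ s t hs ht hst
  have hs' : (0 : ℂ) ≤ (s : ℂ) := by exact_mod_cast hs
  have ht' : (0 : ℂ) ≤ (t : ℂ) := by exact_mod_cast ht
  have e : ∀ X Y : Mat n, s • X + t • Y = (s : ℂ) • X + (t : ℂ) • Y := by
    intro X Y; ext; simp
  have hst' : (s : ℂ) + t = 1 := by exact_mod_cast hst
  refine ⟨?_, ?_, ?_⟩
  · rw [e]; exact (a1.smul hs').add (b1.smul ht')
  · have : 1 - (s • A + t • B) = (s : ℂ) • (1 - A) + (t : ℂ) • (1 - B) := by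
      rw [e, smul_sub, smul_sub]
      have : (1 : Mat n) = (s : ℂ) • (1 : Mat n) + (t : ℂ) • (1 : Mat n) := by
        rw [← add_smul, hst', one_smul]
      conv_lhs => rw [this]
      abel
    rw [this]; exact (a2.smul hs').add (b2.smul ht')
  · rw [e, trace_add, trace_smul, trace_smul, a3, b3, smul_eq_mul, smul_eq_mul, ← add_mul, hst',
      one_mul]

lemma CC.KK {n j r : ℕ} {A : Mat n} (h : CC n j r A) : KK n j A := by
  obtain ⟨t, P, h1, h2, h3, rfl⟩ := h
  exact KK_convex.sum_mem (fun i _ => h1 i) h2 (fun i _ => (h3 i).KK)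

lemma eig_aux {n : ℕ} {A : Mat n} (hA : A.IsHermitian) (c : ℝ)
    (h : (A + (c : ℂ) • (1 : Mat n)) * (A + (c : ℂ) • (1 : Mat n)) = A + (c : ℂ) • (1 : Mat n))
    (i : Fin n) : hA.eigenvalues i + c = 0 ∨ hA.eigenvalues i + c = 1 := by
  have hv := hA.mulVec_eigenvectorBasis i
  have hne : (hA.eigenvectorBasis i).ofLp ≠ 0 := by
    have := hA.eigenvectorBasis.orthonormal.ne_zero i
    intro h0
    exact this (by ext x; exact congrFun h0 x)
  generalize (hA.eigenvectorBasis i).ofLp = v at hv hne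
  generalize hA.eigenvalues i = e at hv ⊢
  have h1 : (A + (c : ℂ) • (1 : Mat n)) *ᵥ v = ((e + c : ℝ) : ℂ) • v := by
    rw [add_mulVec, hv, smul_mulVec, one_mulVec]
    ext x; simp [add_mul]
  have h2 : (((e + c : ℝ) : ℂ) * ((e + c : ℝ) : ℂ)) • v = ((e + c : ℝ) : ℂ) • v := by
    conv_rhs => rw [← h1, ← h, ← mulVec_mulVec, h1, mulVec_smul, h1]
    rw [smul_smul]
  have h3 : ((e + c : ℝ) : ℂ) * ((e + c : ℝ) : ℂ) = ((e + c : ℝ) : ℂ) :=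
    smul_left_injective ℂ hne h2
  have h4 : (e + c) * (e + c) = e + c := by exact_mod_cast h3
  have h5 : (e + c) * (e + c - 1) = 0 := by linarith
  rcases mul_eq_zero.1 h5 with h | h
  · exact Or.inl h
  · exact Or.inr (by linarith)

lemma rank_pr {n : ℕ} {Q : Mat n} (h : IsPr n 1 Q) : Q.rank ≤ 1 := by
  obtain ⟨h1, h2, h3⟩ := h
  have h01 : ∀ i, h1.eigenvalues i = 0 ∨ h1.eigenvalues i = 1 := by
    intro i
    have := eig_aux h1 0 (by simpa using h2) i
    simpa using this
  rw [h1.rank_eq_card_non_zero_eigs, Fintype.card_subtype]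
  have ht : (∑ i, h1.eigenvalues i) = 1 := by
    have := h1.trace_eq_sum_eigenvalues
    rw [h3] at this
    have h : ((∑ i, h1.eigenvalues i : ℝ) : ℂ) = ((1 : ℝ) : ℂ) := by
      rw [Complex.ofReal_sum]; simpa using this.symm
    exact Complex.ofReal_injective h
  have : ∑ i, h1.eigenvalues i = ∑ i, if h1.eigenvalues i ≠ 0 then (1 : ℝ) else 0 := by
    refine Finset.sum_congr rfl fun i _ => ?_
    rcases h01 i with h | h <;> simp [h]
  rw [this] at ht
  simp only [Finset.sum_boole] at ht
  have : (Finset.univ.filter fun i => h1.eigenvalues i ≠ 0).card = 1 := by exact_mod_cast ht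
  exact this.le

lemma rank_add_le' {n : ℕ} (A B : Mat n) : (A + B).rank ≤ A.rank + B.rank := by
  unfold Matrix.rank
  rw [mulVecLin_add]
  refine (Submodule.finrank_mono (t := LinearMap.range A.mulVecLin ⊔ LinearMap.range B.mulVecLin)
    ?_).trans (Submodule.finrank_add_le_finrank_add_finrank _ _)
  rintro _ ⟨x, rfl⟩
  exact Submodule.add_mem_sup ⟨x, rfl⟩ ⟨x, rfl⟩

lemma rank_sum_le {n : ℕ} {ι : Type} (s : Finset ι) (M : ι → Mat n) (h : ∀ i ∈ s, (M i).rank ≤ 1) :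
    (∑ i ∈ s, M i).rank ≤ s.card := by
  classical
  induction s using Finset.induction_on with
  | empty => simp
  | insert a s ha ih =>
    rw [Finset.sum_insert ha, Finset.card_insert_of_notMem ha]
    have h1 := h a (Finset.mem_insert_self _ _)
    have h2 := ih fun i hi => h i (Finset.mem_insert_of_mem hi)
    have := rank_add_le' (M a) (∑ i ∈ s, M i)
    omega

/-- a diagonal entry equal to one forces the column to be a basis vector -/
lemma col_of_diag_one {n j : ℕ} {P : Mat n} (h : IsPr n j P) (k : Fin n) (hk : P k k = 1)
    (l : Fin n) (hl : l ≠ k) : P l k = 0 := by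
  obtain ⟨h1, h2, h3⟩ := h
  have h4 : ∑ x, P k x * P x k = 1 := by
    rw [← hk]; conv_rhs => rw [← h2]
    rw [Matrix.mul_apply]
  have h5 : ∀ x, P k x * P x k = ((Complex.normSq (P x k) : ℝ) : ℂ) := by
    intro x
    rw [← h1.apply k x, Complex.normSq_eq_conj_mul_self]; rfl
  simp only [h5] at h4
  have h6 : ∑ x, Complex.normSq (P x k) = 1 := by exact_mod_cast h4
  rw [← Finset.add_sum_erase _ _ (Finset.mem_univ k), hk] at h6
  simp only [Complex.normSq_one] at h6
  have h7 : ∑ x ∈ Finset.univ.erase k, Complex.normSq (P x k) = 0 := by linarith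
  rw [Finset.sum_eq_zero_iff_of_nonneg (fun _ _ => Complex.normSq_nonneg _)] at h7
  exact Complex.normSq_eq_zero.1 (h7 l (by simp [hl]))

lemma lower {n j r : ℕ} (hj : 1 ≤ j) (hjn : j ≤ n) (h : ∀ A, KK n j A → CC n j r A) :
    n - j + 1 ≤ r := by
  obtain ⟨S, hS⟩ : ∃ S : Finset (Fin n), S.card = j - 1 := by
    obtain ⟨S, -, hS⟩ := Finset.exists_subset_card_eq (s := (Finset.univ : Finset (Fin n)))
      (n := j - 1) (by simp; omega)
    exact ⟨S, hS⟩
  let q : ℝ := ((n - j + 1 : ℕ) : ℝ)⁻¹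
  have hN : (0 : ℝ) < ((n - j + 1 : ℕ) : ℝ) := by positivity
  have hq0 : 0 < q := inv_pos.2 hN
  have hq1 : q ≤ 1 := inv_le_one_of_one_le₀ (by push_cast; linarith [(Nat.cast_nonneg (n - j) : (0:ℝ) ≤ _)])
  have hScC : (Finset.univ.filter fun i => i ∉ S).card = n - j + 1 := by
    have := Finset.card_compl S
    rw [hS, Fintype.card_fin] at this
    have e : (Finset.univ.filter fun i => i ∉ S) = Sᶜ := by ext i; simp
    rw [e]
    omega
  have hA : KK n j (dg fun i => if i ∈ S then 1 else q) := by
    refine KK_dg (fun i => ?_) (fun i => ?_) ?_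
    · split_ifs <;> linarith
    · split_ifs <;> linarith
    · rw [Finset.sum_ite]
      simp only [Finset.sum_const, nsmul_eq_mul, hScC, q, mul_inv_cancel₀ hN.ne']
      simp [hS, Nat.cast_sub hj]
  obtain ⟨t, P, ht0, hts, hP, hPA⟩ := h _ hA
  -- the relevant summands contain the first block
  have hone : ∀ i, t i ≠ 0 → ∀ k ∈ S, P i k k = 1 := by
    intro i hi k hk
    have hle : ∀ i, (P i k k).re ≤ 1 := by
      intro i
      have := (hP i).KK.2.1.diag_nonneg (i := k)
      have := (Complex.le_def.1 this).1
      simp at this; exact this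
    have him : (P i k k).im = 0 := by
      have := (hP i).KK.1.diag_nonneg (i := k)
      exact (Complex.le_def.1 this).2.symm
    have he := congrFun (congrFun hPA k) k
    simp only [dg, diagonal_apply_eq, hk, if_true, Matrix.sum_apply, Matrix.smul_apply] at he
    have he := congrArg Complex.re he
    simp at he
    have hz : ∑ i, t i * (1 - (P i k k).re) = 0 := by
      simp only [mul_sub, mul_one, Finset.sum_sub_distrib]
      rw [hts, ← he]; ring
    rw [Finset.sum_eq_zero_iff_of_nonneg
      (fun i _ => mul_nonneg (ht0 i) (by linarith [hle i]))] at hz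
    have := hz i (Finset.mem_univ _)
    have := (mul_eq_zero.1 this).resolve_left hi
    apply Complex.ext
    · simp; linarith
    · simpa using him
  have hQ : ∀ i, t i ≠ 0 → IsPr n 1 (P i - dg (ind S)) := by
    intro i hi
    have hPD : P i * dg (ind S) = dg (ind S) := by
      ext x y
      simp only [dg, mul_diagonal, ind, diagonal_apply]
      by_cases hy : y ∈ S
      · by_cases hxy : x = y
        · subst hxy; simp [hy, hone i hi x hy]
        · simp [hy, hxy, col_of_diag_one (hP i) y (hone i hi y hy) x hxy]
      · by_cases hxy : x = y
        · subst hxy; simp [hy]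
        · simp [hy, hxy]
    have hDP : dg (ind S) * P i = dg (ind S) := by
      have := congrArg conjTranspose hPD
      rwa [conjTranspose_mul, (hP i).1.eq, (isPr_ind S).1.eq] at this
    refine ⟨(hP i).1.sub (isPr_ind S).1, ?_, ?_⟩
    · rw [Matrix.mul_sub, Matrix.sub_mul, Matrix.sub_mul, (hP i).2.1, hPD, hDP, dg_ind_mul]
      simp
    · rw [trace_sub, (hP i).2.2, (isPr_ind S).2.2, hS, Nat.cast_sub hj]; simp
  have hsum : dg (fun i => if i ∈ S then 0 else q) = ∑ i, (t i : ℂ) • (P i - dg (ind S)) := by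
    have e1 : dg (fun i => if i ∈ S then 0 else q) =
        dg (fun i => if i ∈ S then 1 else q) - dg (ind S) := by
      unfold dg ind
      rw [diagonal_sub]; congr 1; ext i
      by_cases h : i ∈ S <;> simp [h]
    have hts' : ∑ i, (t i : ℂ) = 1 := by exact_mod_cast hts
    rw [e1, hPA]
    simp only [smul_sub, Finset.sum_sub_distrib, ← Finset.sum_smul, hts', one_smul]
    rfl
  have hr1 : (dg (fun i => if i ∈ S then 0 else q)).rank ≤ r := by
    rw [hsum]
    refine (rank_sum_le _ _ ?_).trans (by simp)
    intro i _
    by_cases hi : t i = 0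
    · simp [hi]
    · rw [← smul_one_mul]
      exact (Matrix.rank_mul_le_right _ _).trans (rank_pr (hQ i hi))
  have hr2 : (dg (fun i => if i ∈ S then 0 else q)).rank = n - j + 1 := by
    unfold dg
    rw [Matrix.rank_diagonal, Fintype.card_subtype, ← hScC]
    congr 1
    ext i
    simp [hq0.ne']
  omega

lemma orbit_iff {n j : ℕ} (hn : 1 ≤ n) (hj : j ≤ n) (A : Mat n) :
    A ∈ coadjointOrbit (fun i : Fin n => if (i : ℕ) < j then 1 - (j : ℝ) / n else -((j : ℝ) / n)) ↔
    IsPr n j (A + (((j : ℝ) / n : ℝ) : ℂ) • (1 : Mat n)) := by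
  have hn' : (n : ℝ) ≠ 0 := by positivity
  have hnC : (n : ℂ) ≠ 0 := by exact_mod_cast hn'
  set c : ℝ := (j : ℝ) / n with hc
  have hcn : (c : ℂ) * n = j := by rw [hc]; push_cast; field_simp
  have hcH : ((c : ℂ) • (1 : Mat n)).IsHermitian := by
    rw [IsHermitian, conjTranspose_smul]; simp
  constructor
  · rintro ⟨htr, hA, σ, hσ⟩
    refine ⟨hA.add hcH, ?_, ?_⟩
    · have h01 : ∀ i, hA.eigenvalues i + c = 0 ∨ hA.eigenvalues i + c = 1 := by
        intro i
        have := hσ (σ.symm i)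
        rw [Equiv.apply_symm_apply] at this
        rw [this]
        dsimp only
        split_ifs
        · right; ring
        · left; ring
      have hU1 : ((hA.eigenvectorUnitary : Mat n))ᴴ * (hA.eigenvectorUnitary : Mat n) = 1 :=
        (Unitary.mem_iff.1 hA.eigenvectorUnitary.2).1
      have hU2 : (hA.eigenvectorUnitary : Mat n) * ((hA.eigenvectorUnitary : Mat n))ᴴ = 1 :=
        (Unitary.mem_iff.1 hA.eigenvectorUnitary.2).2
      have hs : A = (hA.eigenvectorUnitary : Mat n) * dg hA.eigenvalues *
          ((hA.eigenvectorUnitary : Mat n))ᴴ := by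
        conv_lhs => rw [hA.spectral_theorem, Unitary.conjStarAlgAut_apply]
        rfl
      generalize (hA.eigenvectorUnitary : Mat n) = U at *
      generalize hA.eigenvalues = a at *
      have hs' : A + (c : ℂ) • (1 : Mat n) = U * dg (fun i => a i + c) * Uᴴ := by
        have : dg (fun i => a i + c) = dg a + (c : ℂ) • (1 : Mat n) := by
          ext x y
          simp only [dg, diagonal_apply, Matrix.add_apply, Matrix.smul_apply, Matrix.one_apply]
          split_ifs <;> simp
        rw [this, Matrix.mul_add, Matrix.add_mul, ← hs, Matrix.mul_smul, Matrix.smul_mul,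
          Matrix.mul_one, hU2]
      rw [hs']
      have hd : dg (fun i => a i + c) * dg (fun i => a i + c) = dg (fun i => a i + c) := by
        unfold dg
        rw [diagonal_mul_diagonal]; congr 1; ext i
        rcases h01 i with h | h <;> simp [h]
      calc U * dg (fun i => a i + c) * Uᴴ * (U * dg (fun i => a i + c) * Uᴴ)
          = U * dg (fun i => a i + c) * (Uᴴ * U) * dg (fun i => a i + c) * Uᴴ := by
            simp only [Matrix.mul_assoc]
        _ = U * (dg (fun i => a i + c) * dg (fun i => a i + c)) * Uᴴ := by
            rw [hU1]; simp only [Matrix.mul_assoc, Matrix.one_mul]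
        _ = _ := by rw [hd]
    · rw [trace_add, htr, trace_smul, trace_one, Fintype.card_fin, smul_eq_mul, hcn, zero_add]
  · rintro ⟨h1, h2, h3⟩
    have hA : A.IsHermitian := by
      have := h1.sub hcH
      rwa [add_sub_cancel_right] at this
    have htr : A.trace = 0 := by
      rw [trace_add, trace_smul, trace_one, Fintype.card_fin, smul_eq_mul, hcn] at h3
      simpa using h3
    refine ⟨htr, hA, ?_⟩
    have h01 := eig_aux hA c h2
    have hes : ∑ i, hA.eigenvalues i = 0 := by
      have := hA.trace_eq_sum_eigenvalues
      rw [htr] at this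
      have h : ((∑ i, hA.eigenvalues i : ℝ) : ℂ) = ((0 : ℝ) : ℂ) := by
        rw [Complex.ofReal_sum]; simpa using this.symm
      exact Complex.ofReal_injective h
    have hcard : (Finset.univ.filter fun i => hA.eigenvalues i + c = 1).card = j := by
      have e1 : ∑ i, (hA.eigenvalues i + c) = j := by
        rw [Finset.sum_add_distrib, hes]
        simp
        rw [hc]; field_simp
      have e2 : ∑ i, (hA.eigenvalues i + c) =
          ∑ i, if hA.eigenvalues i + c = 1 then (1 : ℝ) else 0 := by
        refine Finset.sum_congr rfl fun i _ => ?_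
        rcases h01 i with h | h <;> simp [h]
      rw [e1] at e2
      simp only [Finset.sum_boole] at e2
      exact_mod_cast e2.symm
    have hcard2 : (Finset.univ.filter fun i : Fin n => (i : ℕ) < j).card = j := by
      rw [Fin.card_filter_val_lt]; exact min_eq_right hj
    have heq : Fintype.card {i : Fin n // (i : ℕ) < j} =
        Fintype.card {i : Fin n // hA.eigenvalues i + c = 1} := by
      rw [Fintype.card_subtype, Fintype.card_subtype, hcard, hcard2]
    let e := Fintype.equivOfCardEq heq
    refine ⟨e.extendSubtype, fun i => ?_⟩
    dsimp only
    split_ifs with hi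
    · have := e.extendSubtype_mem i hi
      linarith
    · have := e.extendSubtype_not_mem i hi
      have := (h01 (e.extendSubtype i)).resolve_right this
      linarith

lemma partial_iff {n j r : ℕ} (hn : 1 ≤ n) (hj : j ≤ n) (A : Mat n) :
    A ∈ partialConvexHull r (coadjointOrbit
      (fun i : Fin n => if (i : ℕ) < j then 1 - (j : ℝ) / n else -((j : ℝ) / n))) ↔
    CC n j r (A + (((j : ℝ) / n : ℝ) : ℂ) • (1 : Mat n)) := by
  set E : Mat n := (((j : ℝ) / n : ℝ) : ℂ) • (1 : Mat n) with hE
  constructor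
  · rintro ⟨f, hf, hA⟩
    rw [convexHull_range_eq_exists_affineCombination] at hA
    obtain ⟨s, w, hw0, hw1, rfl⟩ := hA
    rw [s.affineCombination_eq_linear_combination f w hw1]
    refine ⟨fun i => if i ∈ s then w i else 0, fun i => f i + E, ?_, ?_, ?_, ?_⟩
    · intro i
      dsimp only
      split_ifs with h
      · exact hw0 i h
      · exact le_rfl
    · rw [← hw1]; simp
    · intro i; exact (orbit_iff hn hj _).1 (hf i)
    · simp [ite_smul, smul_add, Finset.sum_add_distrib, ← Finset.sum_smul, hw1]
  · rintro ⟨t, P, h1, h2, h3, h4⟩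
    refine ⟨fun i => P i - E, fun i => (orbit_iff hn hj _).2 (by rw [sub_add_cancel]; exact h3 i), ?_⟩
    have : A = ∑ i, t i • (P i - E) := by
      simp only [smul_sub, Finset.sum_sub_distrib, ← Finset.sum_smul, h2, one_smul, ← h4]
      abel
    rw [this]
    exact (convex_convexHull ℝ _).sum_mem (fun i _ => h1 i) h2
      (fun i _ => subset_convexHull ℝ _ ⟨i, rfl⟩)

end FW

theorem minR_convex_fundWeight (n j : ℕ) (hn : 2 ≤ n) (hj : 1 ≤ j) (hjn : j ≤ n - 1) :
    IsLeast {r : ℕ | 1 ≤ r ∧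
        Convex ℝ (partialConvexHull r (coadjointOrbit
          (fun i : Fin n => if (i : ℕ) < j then 1 - (j : ℝ) / n else -((j : ℝ) / n))))}
      (n + 1 - min j (n - j)) := by
  have hn1 : 1 ≤ n := by omega
  have hjn' : j ≤ n := by omega
  have hr : n + 1 - min j (n - j) = max (n - j) j + 1 := by omega
  have hK : ∀ A : FW.Mat n, FW.KK n j A ↔ FW.CC n j (n + 1 - min j (n - j)) A := by
    intro A
    rw [hr]
    exact ⟨FW.good n j A, FW.CC.KK⟩
  constructor
  · refine ⟨by omega, ?_⟩
    intro A hA B hB s t hs ht hst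
    rw [FW.partial_iff hn1 hjn', ← hK] at hA hB ⊢
    have := FW.KK_convex hA hB hs ht hst
    rw [smul_add, smul_add, add_add_add_comm, ← add_smul, hst, one_smul] at this
    exact this
  · rintro r ⟨hr1, hconv⟩
    have hall : ∀ A : FW.Mat n, FW.KK n j A → FW.CC n j r A := by
      intro A hA
      have h2 := (hK A).1 hA
      rw [← sub_add_cancel A ((((j : ℝ) / n : ℝ) : ℂ) • (1 : FW.Mat n)),
        ← FW.partial_iff hn1 hjn'] at h2 ⊢
      obtain ⟨f, hf, hmem⟩ := h2
      refine convexHull_min ?_ hconv hmem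
      rintro _ ⟨i, rfl⟩
      exact ⟨fun _ => f i, fun _ => hf i, subset_convexHull ℝ _ ⟨⟨0, hr1⟩, rfl⟩⟩
    have l1 := FW.lower hj hjn' hall
    have l2 := FW.lower (n := n) (j := n - j) (r := r) (by omega) (by omega) (by
      intro A hA
      have h3 := hA.compl (by omega)
      rw [Nat.sub_sub_self hjn'] at h3
      have h4 := (hall _ h3).compl hjn'
      rwa [sub_sub_cancel] at h4)
    omega
end

section
/- Let n ≥ 2 and let μ(n,1) = (1 − 1/n, −1/n, …, −1/n) ∈ ℝ^n. Then the minimal integer r ≥ 1 such that 0 ∈ C_r(O_{μ(n,1)}) equals n. -/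
open Matrix in
lemma aux_functional {n : ℕ} (hn : 2 ≤ n) (A : Matrix (Fin n) (Fin n) ℂ)
    (h : A ∈ coadjointOrbit
      (fun i : Fin n => if (i : ℕ) < 1 then 1 - (1 : ℝ) / n else -((1 : ℝ) / n))) :
    ∃ φ : (Fin n → ℂ) →ₗ[ℂ] ℂ, ∀ x, φ x = 0 → A *ᵥ x = (-(1 / (n : ℂ))) • x := by
  obtain ⟨-, hA, σ, hσ⟩ := h
  have h0 : 0 < n := by omega
  set U : Matrix (Fin n) (Fin n) ℂ := (hA.eigenvectorUnitary : Matrix (Fin n) (Fin n) ℂ) with hU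
  have hUU : U * star U = 1 := by
    rw [hU]; exact Unitary.coe_mul_star_self hA.eigenvectorUnitary
  have hs := hA.spectral_theorem
  rw [Unitary.conjStarAlgAut_apply] at hs
  refine ⟨(LinearMap.proj (σ ⟨0, h0⟩)).comp (Matrix.mulVecLin (star U)), fun x hx => ?_⟩
  have hx' : (star U *ᵥ x) (σ ⟨0, h0⟩) = 0 := hx
  have hD : (diagonal (RCLike.ofReal ∘ hA.eigenvalues) : Matrix (Fin n) (Fin n) ℂ) *ᵥ (star U *ᵥ x)
      = (-(1 / (n : ℂ))) • (star U *ᵥ x) := by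
    ext i
    obtain ⟨k, rfl⟩ := σ.surjective i
    rw [mulVec_diagonal]
    by_cases hk : k = ⟨0, h0⟩
    · rw [hk, Pi.smul_apply, hx']; simp
    · have hk' : ¬ (k : ℕ) < 1 := by
        intro hlt; apply hk; ext; simp; omega
      simp [hσ, hk']
  conv_lhs => rw [hs]
  rw [← mulVec_mulVec, ← mulVec_mulVec]
  refine (congrArg (fun z => U *ᵥ z) hD).trans ?_
  rw [mulVec_smul, mulVec_mulVec, hUU, one_mulVec]

lemma aux_perm {n : ℕ} (f g : Fin n → ℝ)
    (h : Multiset.map f Finset.univ.val = Multiset.map g Finset.univ.val) :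
    ∃ σ : Equiv.Perm (Fin n), ∀ i, f (σ i) = g i := by
  classical
  have key : ∀ c, Nonempty ({a // g a = c} ≃ {a // f a = c}) := by
    intro c
    refine ⟨Fintype.equivOfCardEq ?_⟩
    have h2 := congrArg (Multiset.count c) h
    rw [Multiset.count_map, Multiset.count_map] at h2
    rw [Fintype.card_subtype, Fintype.card_subtype, Finset.card_def, Finset.card_def,
      Finset.filter_val, Finset.filter_val]
    simpa [eq_comm] using h2.symm
  let e := fun c => (key c).some
  exact ⟨Equiv.ofFiberEquiv e, fun i => Equiv.ofFiberEquiv_map e i⟩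

open Matrix in
lemma aux_diag {n : ℕ} (lam : Fin n → ℝ) (hl : ∑ i, lam i = 0) (τ : Equiv.Perm (Fin n)) :
    (diagonal (fun i => (lam (τ i) : ℂ)) : Matrix (Fin n) (Fin n) ℂ) ∈ coadjointOrbit lam := by
  have hA : (diagonal (fun i => (lam (τ i) : ℂ)) : Matrix (Fin n) (Fin n) ℂ).IsHermitian := by
    apply isHermitian_diagonal_of_self_adjoint
    ext i; simp
  refine ⟨?_, hA, ?_⟩
  · rw [trace_diagonal, Equiv.sum_comp τ (fun i => (lam i : ℂ))]
    exact_mod_cast hl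
  · apply aux_perm
    have h1 := hA.roots_charpoly_eq_eigenvalues
    rw [charpoly_diagonal, Equiv.prod_comp τ (fun i => (Polynomial.X - Polynomial.C (lam i : ℂ))),
      Polynomial.roots_prod _ _
        (by simp [Finset.prod_ne_zero_iff, Polynomial.X_sub_C_ne_zero])] at h1
    have h2 := congrArg (Multiset.map Complex.re) h1
    simpa [Function.comp_def] using h2.symm

/-- For `μ(n,1) = (1 - 1/n, -1/n, …, -1/n)`, the minimal `r ≥ 1` with
`0 ∈ C_r(O_{μ(n,1)})` equals `n`. -/
theorem minR_zero_mem_fundWeight_one (n : ℕ) (hn : 2 ≤ n) :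
    IsLeast {r : ℕ | 1 ≤ r ∧
        (0 : Matrix (Fin n) (Fin n) ℂ) ∈ partialConvexHull r (coadjointOrbit
          (fun i : Fin n => if (i : ℕ) < 1 then 1 - (1 : ℝ) / n else -((1 : ℝ) / n)))}
      n := by
  have h0 : 0 < n := by omega
  have hn0 : (n : ℝ) ≠ 0 := by positivity
  have hnc : (n : ℂ) ≠ 0 := by exact_mod_cast hn0
  constructor
  · refine ⟨by omega, ?_⟩
    set lam : Fin n → ℝ :=
      fun i : Fin n => if (i : ℕ) < 1 then 1 - (1 : ℝ) / n else -((1 : ℝ) / n) with hlam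
    have hlam' : ∀ i, lam i = (if i = ⟨0, h0⟩ then 1 else 0) - 1 / n := by
      intro i
      by_cases hi : i = ⟨0, h0⟩
      · simp [hlam, hi]
      · have : ¬ (i : ℕ) < 1 := by
          intro hlt; apply hi; ext; simp; omega
        simp [hlam, hi]
        intro h; exact absurd (by omega) this
    have hsum : ∑ i, lam i = 0 := by
      simp [hlam', Finset.sum_sub_distrib, hn0]
    refine ⟨fun k => Matrix.diagonal (fun i => (lam (Equiv.swap ⟨0, h0⟩ k i) : ℂ)),
      fun k => aux_diag lam hsum _, ?_⟩
    have hz : (0 : Matrix (Fin n) (Fin n) ℂ) = ∑ k : Fin n, (1 / (n : ℝ)) •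
        Matrix.diagonal (fun i => (lam (Equiv.swap ⟨0, h0⟩ k i) : ℂ)) := by
      rw [← Finset.smul_sum]
      have : ∑ k : Fin n, (Matrix.diagonal (fun i => (lam (Equiv.swap ⟨0, h0⟩ k i) : ℂ)) :
          Matrix (Fin n) (Fin n) ℂ) = 0 := by
        ext i j
        rw [Matrix.sum_apply]
        by_cases hij : i = j
        · subst hij
          simp only [Matrix.diagonal_apply_eq, Matrix.zero_apply]
          have : ∀ k : Fin n, lam (Equiv.swap ⟨0, h0⟩ k i) = (if k = i then 1 else 0) - 1 / n := by
            intro k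
            rw [hlam']
            congr 1
            have : (Equiv.swap ⟨0, h0⟩ k i = ⟨0, h0⟩) ↔ k = i := by
              rw [Equiv.swap_apply_eq_iff, Equiv.swap_apply_left, eq_comm]
            simp [this]
          rw [← Complex.ofReal_sum]
          simp [this, Finset.sum_sub_distrib, hn0]
        · simp [Matrix.diagonal_apply_ne _ hij]
      rw [this, smul_zero]
    rw [hz]
    refine (convex_convexHull ℝ _).sum_mem (fun _ _ => by positivity) (by simp [hn0])
      (fun k _ => subset_convexHull ℝ _ ⟨k, rfl⟩)
  · rintro r ⟨-, f, hf, hmem⟩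
    by_contra hlt
    push Not at hlt
    choose φ hφ using fun i => aux_functional hn (f i) (hf i)
    have hker : LinearMap.ker (LinearMap.pi φ) ≠ ⊥ :=
      LinearMap.ker_ne_bot_of_finrank_lt (by simpa using hlt)
    obtain ⟨x, hx, hx0⟩ := Submodule.exists_mem_ne_zero_of_ne_bot hker
    have hx' : ∀ i, φ i x = 0 := fun i => congrFun (LinearMap.mem_ker.1 hx) i
    have hconv : Convex ℝ {B : Matrix (Fin n) (Fin n) ℂ | B.mulVec x = (-(1 / (n : ℂ))) • x} := by
      intro B hB C hC a b _ _ hab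
      simp only [Set.mem_ofPred_eq] at hB hC ⊢
      rw [Matrix.add_mulVec, Matrix.smul_mulVec, Matrix.smul_mulVec, hB, hC, ← add_smul, hab,
        one_smul]
    have h := convexHull_min (by rintro _ ⟨i, rfl⟩; exact hφ i x (hx' i)) hconv hmem
    simp only [Set.mem_ofPred_eq, Matrix.zero_mulVec] at h
    rcases smul_eq_zero.1 h.symm with h | h
    · simp [hnc] at h
    · exact hx0 h
end

section
/- Let n ≥ 3 and let μ(n,2) ∈ ℝ^n be the vector whose first two coordinates equal 1 − 2/n and whose remaining n−2 coordinates equal −2/n. Then the minimal integer r ≥ 1 such that 0 ∈ C_r(O_{μ(n,2)}) equals n/2 if n is even, and equals (n+3)/2 if n is odd. -/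
open Matrix in
theorem perm_of_map_eq {n : ℕ} (f g : Fin n → ℝ)
    (h : Multiset.map f Finset.univ.val = Multiset.map g Finset.univ.val) :
    ∃ σ : Equiv.Perm (Fin n), ∀ i, g (σ i) = f i := by
  classical
  have hc : ∀ c, Fintype.card {i // f i = c} = Fintype.card {i // g i = c} := by
    intro c
    have := congrArg (Multiset.count c) h
    rw [Multiset.count_map, Multiset.count_map] at this
    rw [Fintype.card_subtype, Fintype.card_subtype]
    simp only [Finset.card_def, Finset.filter_val]
    simpa [eq_comm] using this
  refine ⟨Equiv.ofFiberEquiv (f := f) (g := g) (fun c => Fintype.equivOfCardEq (hc c)), ?_⟩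
  intro i
  exact Equiv.ofFiberEquiv_map _ i

theorem diag_mem {n : ℕ} (lam : Fin n → ℝ) (h0 : ∑ i, lam i = 0) (τ : Equiv.Perm (Fin n)) :
    Matrix.diagonal (fun i => ((lam (τ i) : ℝ) : ℂ)) ∈ coadjointOrbit lam := by
  have hA : (Matrix.diagonal (fun i => ((lam (τ i) : ℝ) : ℂ))).IsHermitian := by
    apply Matrix.isHermitian_diagonal_of_self_adjoint
    ext i
    simp
  refine ⟨?_, hA, ?_⟩
  · rw [Matrix.trace_diagonal, Equiv.sum_comp τ (fun i => (lam i : ℂ))]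
    exact_mod_cast h0
  · apply perm_of_map_eq
    have h1 := hA.roots_charpoly_eq_eigenvalues
    rw [Matrix.charpoly_diagonal, Polynomial.roots_prod] at h1
    · have h2 := congrArg (Multiset.map Complex.re) h1
      rw [Multiset.map_bind, Multiset.map_map] at h2
      simp only [Polynomial.roots_X_sub_C, Multiset.map_singleton, Complex.ofReal_re,
        Multiset.bind_singleton] at h2
      have h3 : Multiset.map (fun i => lam (τ i)) Finset.univ.val =
        Multiset.map hA.eigenvalues Finset.univ.val := h2
      rw [← h3]
      have : (Finset.univ : Finset (Fin n)).val.map τ = Finset.univ.val := by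
        have := Finset.map_univ_equiv τ
        exact congrArg Finset.val this
      conv_lhs => rw [← this]
      rw [Multiset.map_map]
      rfl
    · simp [Finset.prod_ne_zero_iff, Polynomial.X_sub_C_ne_zero]

noncomputable def fw (n : ℕ) : Fin n → ℝ :=
  fun i : Fin n => if (i : ℕ) < 2 then 1 - (2 : ℝ) / n else -((2 : ℝ) / n)

theorem fw_eq (n : ℕ) (i : Fin n) : fw n i = (if (i : ℕ) < 2 then 1 else 0) - (2 : ℝ) / n := by
  unfold fw; split_ifs <;> simp

theorem card_lt_two (n : ℕ) (hn : 3 ≤ n) :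
    (Finset.univ.filter (fun i : Fin n => (i : ℕ) < 2)).card = 2 := by
  have := Fin.card_filter_val_lt (n := n) (m := 2)
  rw [this]; omega

theorem fw_sum (n : ℕ) (hn : 3 ≤ n) : ∑ i, fw n i = 0 := by
  simp only [fw_eq, Finset.sum_sub_distrib]
  have : (n : ℝ) ≠ 0 := by positivity
  rw [Finset.sum_boole, card_lt_two n hn]
  simp
  field_simp
  norm_num

theorem pair_mem (n : ℕ) (hn : 3 ≤ n) (a b : Fin n) (hab : a ≠ b) :
    Matrix.diagonal (fun i => (((if i = a ∨ i = b then 1 else 0) - (2 : ℝ) / n : ℝ) : ℂ))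
      ∈ coadjointOrbit (fw n) := by
  let z : Fin n := ⟨0, by omega⟩
  let o : Fin n := ⟨1, by omega⟩
  have hzo : z ≠ o := by simp [z, o]
  let τ : Equiv.Perm (Fin n) := (Equiv.swap a z).trans (Equiv.swap (Equiv.swap a z b) o)
  have hs : z ≠ Equiv.swap a z b := by
    intro h
    apply hab
    apply (Equiv.swap a z).injective
    rw [← h]; simp
  have ha : τ a = z := by
    simp only [τ, Equiv.trans_apply, Equiv.swap_apply_left]
    exact Equiv.swap_apply_of_ne_of_ne hs hzo
  have hb : τ b = o := by
    simp [τ]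
  have := diag_mem (fw n) (fw_sum n hn) τ
  convert this using 4 with i
  rw [fw_eq]
  congr 1
  have : ((τ i : ℕ) < 2) ↔ (i = a ∨ i = b) := by
    have e1 : i = a ↔ τ i = z := by rw [← ha, τ.injective.eq_iff]
    have e2 : i = b ↔ τ i = o := by rw [← hb, τ.injective.eq_iff]
    rw [e1, e2, Fin.ext_iff, Fin.ext_iff]
    simp only [z, o]
    omega
  simp [this]

theorem upper (n : ℕ) (hn : 3 ≤ n) (r : ℕ) (a b : ℕ → ℕ) (w : ℕ → ℝ)
    (ha : ∀ i < r, a i < b i) (hb : ∀ i < r, b i < n) (hw : ∀ i, 0 ≤ w i)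
    (hw1 : ∑ i ∈ Finset.range r, w i = 1)
    (hj : ∀ j < n, ∑ i ∈ Finset.range r, w i * (if j = a i ∨ j = b i then 1 else 0) = 2 / (n : ℝ)) :
    (0 : Matrix (Fin n) (Fin n) ℂ) ∈ partialConvexHull r (coadjointOrbit (fw n)) := by
  let A : Fin r → Fin n := fun i => ⟨a i, (ha i i.2).trans (hb i i.2)⟩
  let B : Fin r → Fin n := fun i => ⟨b i, hb i i.2⟩
  have hw1' : ∑ i : Fin r, w i = 1 := by rw [← hw1, Finset.sum_range]
  refine ⟨fun k => Matrix.diagonal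
    (fun i => (((if i = A k ∨ i = B k then 1 else 0) - (2 : ℝ) / n : ℝ) : ℂ)), ?_, ?_⟩
  · intro k
    apply pair_mem n hn
    intro h
    have := ha k k.2
    simp only [A, B, Fin.mk.injEq] at h
    omega
  · refine mem_convexHull_of_exists_fintype (fun k : Fin r => w k) _ (fun k => hw k) hw1'
      (fun k => Set.mem_range_self k) ?_
    ext i j
    rw [Matrix.sum_apply]
    by_cases hij : i = j
    · subst hij
      have h := hj i i.2
      rw [Finset.sum_range] at h
      simp only [Matrix.smul_apply, Matrix.diagonal_apply_eq, Matrix.zero_apply, Complex.real_smul]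
      have : ∑ k : Fin r, w k * ((if i = A k ∨ i = B k then 1 else 0) - (2 : ℝ) / n) = 0 := by
        simp only [mul_sub, Finset.sum_sub_distrib]
        rw [← Finset.sum_mul, hw1', one_mul, sub_eq_zero, ← h]
        simp only [A, B, Fin.ext_iff]
      exact_mod_cast this
    · simp [Matrix.diagonal_apply_ne _ hij]

theorem pair_sum (m j : ℕ) :
    ∑ i ∈ Finset.range m, (if j = 2 * i ∨ j = 2 * i + 1 then (1 : ℝ) else 0)
      = if j < 2 * m then 1 else 0 := by
  induction m with
  | zero => simp
  | succ m ih =>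
    rw [Finset.sum_range_succ, ih]
    split_ifs <;> first | omega | simp

theorem upper_even (m : ℕ) (hn : 3 ≤ 2 * m) :
    (0 : Matrix (Fin (2 * m)) (Fin (2 * m)) ℂ) ∈
      partialConvexHull m (coadjointOrbit (fw (2 * m))) := by
  have hm : (m : ℝ) ≠ 0 := by
    have : m ≠ 0 := by omega
    exact_mod_cast this
  apply upper (2 * m) hn m (fun i => 2 * i) (fun i => 2 * i + 1) (fun _ => 2 / ((2 * m : ℕ) : ℝ))
  · intro i hi; simp
  · intro i hi; omega
  · intro i; positivity
  · simp; field_simp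
  · intro j hj
    rw [← Finset.mul_sum, pair_sum]
    simp [hj]

theorem upper_odd (m : ℕ) :
    (0 : Matrix (Fin (2 * m + 3)) (Fin (2 * m + 3)) ℂ) ∈
      partialConvexHull (m + 3) (coadjointOrbit (fw (2 * m + 3))) := by
  have hm : (2 * (m : ℝ) + 3) ≠ 0 := by positivity
  apply upper (2 * m + 3) (by omega) (m + 3)
    (fun i => if i < m then 2 * i else if i = m + 2 then 2 * m + 1 else 2 * m)
    (fun i => if i < m then 2 * i + 1 else if i = m then 2 * m + 1 else 2 * m + 2)
    (fun i => if i < m then 2 / ((2 * m + 3 : ℕ) : ℝ) else 1 / ((2 * m + 3 : ℕ) : ℝ))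
  · intro i hi; split_ifs <;> omega
  · intro i hi; split_ifs <;> omega
  · intro i; split_ifs <;> positivity
  · rw [Finset.sum_range_succ, Finset.sum_range_succ, Finset.sum_range_succ,
      Finset.sum_congr rfl (g := fun _ => 2 / ((2 * m + 3 : ℕ) : ℝ))
      (fun i hi => by rw [if_pos (Finset.mem_range.1 hi)])]
    simp
    field_simp
    ring
  · intro j hj
    rw [Finset.sum_range_succ, Finset.sum_range_succ, Finset.sum_range_succ,
      Finset.sum_congr rfl (g := fun i => 2 / ((2 * m + 3 : ℕ) : ℝ) *
        (if j = 2 * i ∨ j = 2 * i + 1 then (1 : ℝ) else 0))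
      (fun i hi => by simp only [if_pos (Finset.mem_range.1 hi)]), ← Finset.mul_sum, pair_sum]
    simp only [lt_irrefl, if_false, if_true, show ¬ (m + 1 < m) by omega,
      show ¬ (m + 2 < m) by omega, show ¬ (m = m + 2) by omega, show ¬ (m + 1 = m + 2) by omega,
      show ¬ (m + 1 = m) by omega, show ¬ (m + 2 = m) by omega]
    rcases lt_or_ge j (2 * m) with h | h
    · simp [h, show j ≠ 2 * m by omega, show j ≠ 2 * m + 1 by omega, show j ≠ 2 * m + 2 by omega]
    · obtain rfl | rfl | rfl : j = 2 * m ∨ j = 2 * m + 1 ∨ j = 2 * m + 2 := by omega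
      all_goals (simp; ring)

theorem orbit_proj (n : ℕ) (hn : 3 ≤ n) (A : Matrix (Fin n) (Fin n) ℂ)
    (hA : A ∈ coadjointOrbit (fw n)) :
    ∃ P : Matrix (Fin n) (Fin n) ℂ, A = P - ((2 / n : ℝ) : ℂ) • 1 ∧ P * P = P ∧ P.rank ≤ 2 := by
  obtain ⟨-, h, σ, hσ⟩ := hA
  let d : Fin n → ℂ := fun i => if ((σ.symm i : Fin n) : ℕ) < 2 then 1 else 0
  let U : Matrix (Fin n) (Fin n) ℂ := h.eigenvectorUnitary
  have hU1 : star U * U = 1 := Unitary.coe_star_mul_self h.eigenvectorUnitary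
  have hU2 : U * star U = 1 := Unitary.coe_mul_star_self h.eigenvectorUnitary
  have hd : Matrix.diagonal (RCLike.ofReal ∘ h.eigenvalues) =
      Matrix.diagonal d - ((2 / n : ℝ) : ℂ) • (1 : Matrix (Fin n) (Fin n) ℂ) := by
    rw [Matrix.smul_one_eq_diagonal, Matrix.diagonal_sub]
    congr 1
    ext i
    have := hσ (σ.symm i)
    rw [Equiv.apply_symm_apply, fw_eq] at this
    simp only [Function.comp, this, d]
    split_ifs <;> simp
  refine ⟨U * Matrix.diagonal d * star U, ?_, ?_, ?_⟩
  · have hs := h.spectral_theorem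
    rw [Unitary.conjStarAlgAut_apply, hd] at hs
    conv_lhs => rw [hs]
    change U * _ * star U = _
    rw [mul_sub, sub_mul]
    congr 1
    simp [hU2]
  · have : Matrix.diagonal d * Matrix.diagonal d = Matrix.diagonal d := by
      rw [Matrix.diagonal_mul_diagonal]
      congr 1
      ext i
      simp [d]
    calc _ = U * (Matrix.diagonal d * (star U * U) * Matrix.diagonal d) * star U := by
          simp only [mul_assoc]
      _ = _ := by rw [hU1, mul_one, this]
  · refine (Matrix.rank_mul_le_left _ _).trans ((Matrix.rank_mul_le_right _ _).trans ?_)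
    classical
    rw [Matrix.rank_diagonal]
    rw [Fintype.card_subtype, ← card_lt_two n hn]
    apply le_of_eq
    apply Finset.card_equiv σ.symm
    intro i
    simp [d]

theorem mat_rank_add_le {n : ℕ} (A B : Matrix (Fin n) (Fin n) ℂ) :
    (A + B).rank ≤ A.rank + B.rank := by
  unfold Matrix.rank
  rw [Matrix.mulVecLin_add]
  exact (Submodule.finrank_mono (LinearMap.range_add_le _ _)).trans
    (Submodule.finrank_add_le_finrank_add_finrank _ _)

theorem rank_sum_le' {n : ℕ} {ι : Type*} (s : Finset ι) (M : ι → Matrix (Fin n) (Fin n) ℂ)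
    (h : ∀ i ∈ s, (M i).rank ≤ 2) : (∑ i ∈ s, M i).rank ≤ 2 * s.card := by
  classical
  induction s using Finset.induction_on with
  | empty => simp
  | insert a s ha ih =>
    rw [Finset.sum_insert ha, Finset.card_insert_of_notMem ha]
    have h1 := h a (Finset.mem_insert_self _ _)
    have h2 := ih (fun i hi => h i (Finset.mem_insert_of_mem hi))
    have h3 := mat_rank_add_le (M a) (∑ i ∈ s, M i)
    omega

theorem lower (n : ℕ) (hn : 3 ≤ n) (r : ℕ) (hr : 1 ≤ r)
    (h : (0 : Matrix (Fin n) (Fin n) ℂ) ∈ partialConvexHull r (coadjointOrbit (fw n)))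
    (hlt : 2 * (r - 1) < n) : 2 * r = n := by
  classical
  have hn0 : (n : ℂ) ≠ 0 := by
    have : n ≠ 0 := by omega
    exact_mod_cast this
  obtain ⟨f, hf, hc⟩ := h
  obtain ⟨ι, _, w, z, hw0, hw1, hz, hs⟩ := mem_convexHull_iff_exists_fintype.1 hc
  choose g hg using hz
  choose P hP1 hP2 hP3 using fun i => orbit_proj n hn (f i) (hf i)
  let c : Fin r → ℂ := fun i => ∑ k with g k = i, ((w k : ℝ) : ℂ)
  have hc1 : ∑ i, c i = 1 := by
    simp only [c]
    rw [Finset.sum_fiberwise]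
    exact_mod_cast hw1
  have hc2 : ∑ i, c i • f i = 0 := by
    rw [← hs, ← Finset.sum_fiberwise Finset.univ g]
    refine Finset.sum_congr rfl fun i _ => ?_
    simp only [c]
    rw [Finset.sum_smul]
    refine Finset.sum_congr rfl fun k hk => ?_
    rw [← hg k, (Finset.mem_filter.1 hk).2]
    ext a b
    simp
  have hc3 : ∑ i, c i • P i = ((2 / n : ℝ) : ℂ) • (1 : Matrix (Fin n) (Fin n) ℂ) := by
    rw [← sub_eq_zero, ← hc2]
    simp only [hP1, smul_sub, Finset.sum_sub_distrib]
    rw [← Finset.sum_smul, hc1, one_smul]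
  have key : ∀ i, c i = 2 / n := by
    intro i
    have hrk := rank_sum_le' (Finset.univ.erase i) (fun j => c j • P j) (by
      intro j _
      rw [show c j • P j = (c j • (1 : Matrix (Fin n) (Fin n) ℂ)) * P j by simp]
      exact (Matrix.rank_mul_le_right _ _).trans (hP3 j))
    rw [Finset.card_erase_of_mem (Finset.mem_univ _), Finset.card_univ, Fintype.card_fin] at hrk
    set M := ∑ j ∈ Finset.univ.erase i, c j • P j with hM
    have hdet : M.det = 0 := by
      by_contra hne
      have := Matrix.rank_of_isUnit M ((Matrix.isUnit_iff_isUnit_det M).2 (isUnit_iff_ne_zero.2 hne))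
      rw [Fintype.card_fin] at this
      omega
    obtain ⟨v, hv, hMv⟩ := Matrix.exists_mulVec_eq_zero_iff.2 hdet
    rw [← Finset.add_sum_erase _ _ (Finset.mem_univ i), ← hM] at hc3
    have e1 : c i • (P i).mulVec v = ((2 / n : ℝ) : ℂ) • v := by
      have := congrArg (fun X => Matrix.mulVec X v) hc3
      simpa only [Matrix.add_mulVec, hMv, add_zero, Matrix.smul_mulVec, Matrix.one_mulVec] using this
    have e2 : c i • (P i).mulVec v = ((2 / n : ℝ) : ℂ) • (P i).mulVec v := by
      have := congrArg (fun x => (P i).mulVec x) e1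
      simpa only [Matrix.mulVec_smul, Matrix.mulVec_mulVec, hP2] using this
    have h2n : ((2 / n : ℝ) : ℂ) = 2 / n := by push_cast; rfl
    rw [h2n] at e1 e2
    have hne : (2 / n : ℂ) ≠ 0 := div_ne_zero two_ne_zero hn0
    have e3 : (P i).mulVec v = v := by
      rw [e1] at e2
      exact (smul_right_injective _ hne e2).symm
    rw [e3] at e1
    exact smul_left_injective _ hv e1
  rw [Finset.sum_congr rfl (fun i _ => key i)] at hc1
  simp at hc1
  field_simp at hc1
  have : ((2 * r : ℕ) : ℂ) = (n : ℕ) := by push_cast; rw [← hc1]; ring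
  exact_mod_cast this

/-- For `μ(n,2)` (first two coordinates `1 - 2/n`, remaining coordinates `-2/n`),
the minimal `r ≥ 1` with `0 ∈ C_r(O_{μ(n,2)})` equals `n/2` if `n` is even and
`(n+3)/2` if `n` is odd. -/
theorem minR_zero_mem_fundWeight_two (n : ℕ) (hn : 3 ≤ n) :
    IsLeast {r : ℕ | 1 ≤ r ∧
        (0 : Matrix (Fin n) (Fin n) ℂ) ∈ partialConvexHull r (coadjointOrbit
          (fun i : Fin n => if (i : ℕ) < 2 then 1 - (2 : ℝ) / n else -((2 : ℝ) / n)))}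
      (if Even n then n / 2 else (n + 3) / 2) := by
  change IsLeast {r : ℕ | 1 ≤ r ∧
        (0 : Matrix (Fin n) (Fin n) ℂ) ∈ partialConvexHull r (coadjointOrbit (fw n))} _
  constructor
  · split_ifs with he
    · obtain ⟨m, rfl⟩ := even_iff_exists_two_mul.1 he
      refine ⟨by omega, ?_⟩
      rw [show 2 * m / 2 = m by omega]
      exact upper_even m hn
    · obtain ⟨m, rfl⟩ : ∃ m, n = 2 * m + 3 := by
        obtain ⟨k, rfl⟩ := Nat.not_even_iff_odd.1 he
        exact ⟨k - 1, by omega⟩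
      refine ⟨by omega, ?_⟩
      rw [show (2 * m + 3 + 3) / 2 = m + 3 by omega]
      exact upper_odd m
  · rintro r ⟨hr, h⟩
    have hl := lower n hn r hr h
    split_ifs with he
    · obtain ⟨m, rfl⟩ := even_iff_exists_two_mul.1 he
      omega
    · obtain ⟨m, rfl⟩ := Nat.not_even_iff_odd.1 he
      omega
end
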